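/- arXiv:2603.21671 — 2 statements merged into one kernel-verified Lean document; each statement's English description precedes it below -/
import Mathlib

section
/- Let f : ℝ^d → ℝ be a convex function and S an invertible d × d real matrix. Let Q(x) and Q^S(x) be the matrices of Radon–Nikodym derivatives of the absolutely continuous parts of the second derivative measures of f and of x ↦ f(Sx), respectively. Then for Lebesgue-almost every x ∈ ℝ^d: Q^S(x) = Sᵀ Q(Sx) S. -/
open MeasureTheory Filter Metric
open scoped Topology ENNReal NNReal

/-- The second partial derivative `∂_i ∂_j φ` at `x`. -/
noncomputable def secondPartial (d : ℕ) (φ : EuclideanSpace ℝ (Fin d) → ℝ)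
    (i j : Fin d) (x : EuclideanSpace ℝ (Fin d)) : ℝ :=
  fderiv ℝ (fun z => fderiv ℝ φ z (EuclideanSpace.single j 1)) x (EuclideanSpace.single i 1)

/-- `μp, μn` represent the (signed) second derivative measures `μ_{ij} = μp i j - μn i j`
of the function `g`. -/
def IsSecondDerivMeasures (d : ℕ) (g : EuclideanSpace ℝ (Fin d) → ℝ)
    (μp μn : Fin d → Fin d → Measure (EuclideanSpace ℝ (Fin d))) : Prop :=
  (∀ i j, IsLocallyFiniteMeasure (μp i j)) ∧ (∀ i j, IsLocallyFiniteMeasure (μn i j)) ∧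
  ∀ i j, ∀ φ : EuclideanSpace ℝ (Fin d) → ℝ, ContDiff ℝ (⊤ : ℕ∞) φ → HasCompactSupport φ →
    (∫ x, φ x ∂(μp i j)) - (∫ x, φ x ∂(μn i j)) = ∫ x, g x * secondPartial d φ i j x

/-- The matrix of Radon–Nikodym derivatives of the absolutely continuous parts of the
second derivative measures. -/
noncomputable def densityMatrix (d : ℕ)
    (μp μn : Fin d → Fin d → Measure (EuclideanSpace ℝ (Fin d)))
    (x : EuclideanSpace ℝ (Fin d)) : Matrix (Fin d) (Fin d) ℝ :=
  Matrix.of fun i j =>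
    ((μp i j).rnDeriv volume x).toReal - ((μn i j).rnDeriv volume x).toReal

/-!
Pushing the second derivative measures of `f ∘ S` forward along `S` turns the chain rule for the
second derivatives of a test function into a linear relation, with coefficients
`|det S|⁻¹ S k i S l j`, between the pushforwards and the second derivative measures of `f`.
A linear relation that holds against all test functions passes to the densities of the absolutely
continuous parts, because all measures involved have bounded densities with respect to one locally
finite measure. The factor `|det S|⁻¹` is the one by which `S` rescales Lebesgue measure, and it
cancels against the same factor in the densities of the pushforwards.
-/

section SignedDensity

variable {X : Type*} [MeasurableSpace X]

/-- The density with respect to `ν` of the absolutely continuous part of the signed measure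
`p - n`. The signed measure is encoded by a pair of measures because a `SignedMeasure` is finite,
whereas here `p` and `n` may both be infinite. -/
noncomputable def signedDensity (p n ν : Measure X) (x : X) : ℝ :=
  (p.rnDeriv ν x).toReal - (n.rnDeriv ν x).toReal

theorem signedDensity_ae_eq_mul_rnDeriv {p n κ : Measure X} (ν : Measure X) [SigmaFinite p]
    [SigmaFinite n] [SigmaFinite κ] [SigmaFinite ν] (hp : p ≪ κ) (hn : n ≪ κ) :
    signedDensity p n ν =ᵐ[ν] fun x => signedDensity p n κ x * (κ.rnDeriv ν x).toReal := by
  filter_upwards [Measure.rnDeriv_mul_rnDeriv (κ := ν) hp,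
    Measure.rnDeriv_mul_rnDeriv (κ := ν) hn] with x hpx hnx
  simp only [signedDensity, ← hpx, ← hnx, Pi.mul_apply, ENNReal.toReal_mul, sub_mul]

variable [TopologicalSpace X]

theorem locallyIntegrable_toReal_rnDeriv_of_le {m κ : Measure X} [SigmaFinite κ]
    [IsLocallyFiniteMeasure κ] (h : m ≤ κ) :
    LocallyIntegrable (fun x => (m.rnDeriv κ x).toReal) κ := by
  refine (locallyIntegrable_const (1 : ℝ)).mono
    (Measure.measurable_rnDeriv m κ).ennreal_toReal.aestronglyMeasurable ?_
  filter_upwards [Measure.rnDeriv_le_one_of_le h] with x hx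
  simpa using ENNReal.toReal_mono ENNReal.one_ne_top hx

theorem locallyIntegrable_signedDensity_of_le {p n κ : Measure X} [SigmaFinite κ]
    [IsLocallyFiniteMeasure κ] (hp : p ≤ κ) (hn : n ≤ κ) :
    LocallyIntegrable (signedDensity p n κ) κ :=
  (locallyIntegrable_toReal_rnDeriv_of_le hp).sub (locallyIntegrable_toReal_rnDeriv_of_le hn)

theorem integral_smul_signedDensity_of_le [T2Space X] [OpensMeasurableSpace X]
    {p n κ : Measure X} [SigmaFinite p] [SigmaFinite n] [SigmaFinite κ]
    [IsLocallyFiniteMeasure κ] (hp : p ≤ κ) (hn : n ≤ κ) {φ : X → ℝ} (hφ : Continuous φ)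
    (hφc : HasCompactSupport φ) :
    ∫ x, φ x • signedDensity p n κ x ∂κ = ∫ x, φ x ∂p - ∫ x, φ x ∂n := by
  have hint {m : Measure X} (hm : m ≤ κ) : Integrable (fun x => φ x * (m.rnDeriv κ x).toReal) κ :=
    (locallyIntegrable_toReal_rnDeriv_of_le hm).integrable_smul_left_of_hasCompactSupport hφ hφc
  have hdens {m : Measure X} [SigmaFinite m] (hm : m ≤ κ) :
      ∫ x, φ x * (m.rnDeriv κ x).toReal ∂κ = ∫ x, φ x ∂m := by
    simpa only [smul_eq_mul, mul_comm] using
      integral_rnDeriv_smul (f := φ) (Measure.absolutelyContinuous_of_le hm)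
  simp only [signedDensity, smul_eq_mul, mul_sub]
  rw [integral_sub (hint hp) (hint hn), hdens hp, hdens hn]

theorem isLocallyFiniteMeasure_add (m₁ m₂ : Measure X) [IsLocallyFiniteMeasure m₁]
    [IsLocallyFiniteMeasure m₂] : IsLocallyFiniteMeasure (m₁ + m₂) where
  finiteAtNhds x := by
    obtain ⟨u, hu, hm₁u⟩ := m₁.finiteAt_nhds x
    obtain ⟨v, hv, hm₂v⟩ := m₂.finiteAt_nhds x
    exact ⟨u ∩ v, inter_mem hu hv, ENNReal.add_lt_top.2
      ⟨measure_lt_top_mono Set.inter_subset_left hm₁u,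
        measure_lt_top_mono Set.inter_subset_right hm₂v⟩⟩

theorem exists_isLocallyFiniteMeasure_forall_le {s : Set (Measure X)} (hs : s.Finite)
    (hlf : ∀ m ∈ s, IsLocallyFiniteMeasure m) :
    ∃ κ : Measure X, IsLocallyFiniteMeasure κ ∧ ∀ m ∈ s, m ≤ κ := by
  induction s, hs using Set.Finite.induction_on with
  | empty => exact ⟨0, inferInstance, by simp⟩
  | @insert m s _ _ ih =>
    obtain ⟨κ, hκ, hle⟩ := ih fun m' hm' => hlf m' (Set.mem_insert_of_mem m hm')
    have := hlf m (Set.mem_insert m s)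
    exact ⟨m + κ, isLocallyFiniteMeasure_add m κ, Set.forall_mem_insert.2
      ⟨Measure.le_add_right le_rfl, fun m' hm' => Measure.le_add_left (hle m' hm')⟩⟩

end SignedDensity

section LinearRelation

variable {E : Type*} [NormedAddCommGroup E] [NormedSpace ℝ E] [FiniteDimensional ℝ E]
  [MeasurableSpace E] [BorelSpace E] {ι : Type*} [Fintype ι]
  {p n : ι → Measure E} {p₀ n₀ : Measure E} {c : ι → ℝ}

theorem signedDensity_ae_eq_sum_of_le {κ : Measure E} [IsLocallyFiniteMeasure κ]
    (hp : ∀ a, p a ≤ κ) (hn : ∀ a, n a ≤ κ) (hp₀ : p₀ ≤ κ) (hn₀ : n₀ ≤ κ)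
    (h : ∀ φ : E → ℝ, ContDiff ℝ (⊤ : ℕ∞) φ → HasCompactSupport φ →
      ∫ x, φ x ∂p₀ - ∫ x, φ x ∂n₀ = ∑ a, c a * (∫ x, φ x ∂(p a) - ∫ x, φ x ∂(n a))) :
    signedDensity p₀ n₀ κ =ᵐ[κ] fun x => ∑ a, c a * signedDensity (p a) (n a) κ x := by
  have hlf {m : Measure E} (hm : m ≤ κ) : IsLocallyFiniteMeasure m :=
    Measure.isLocallyFiniteMeasure_of_le hm
  have := hlf hp₀
  have := hlf hn₀
  have := fun a => hlf (hp a)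
  have := fun a => hlf (hn a)
  have hloc (a : ι) : LocallyIntegrable (fun x => c a * signedDensity (p a) (n a) κ x) κ :=
    (locallyIntegrable_signedDensity_of_le (hp a) (hn a)).smul (c a)
  have hlocsum : LocallyIntegrable (fun x => ∑ a, c a * signedDensity (p a) (n a) κ x) κ := by
    simpa only [Finset.sum_apply] using
      locallyIntegrable_finsetSum Finset.univ fun a _ => hloc a
  refine ae_eq_of_integral_contDiff_smul_eq (locallyIntegrable_signedDensity_of_le hp₀ hn₀)
    hlocsum fun φ hφ hφc => ?_
  simp_rw [Finset.smul_sum]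
  rw [integral_smul_signedDensity_of_le hp₀ hn₀ hφ.continuous hφc, h φ hφ hφc,
    integral_finsetSum _ fun a _ =>
      (hloc a).integrable_smul_left_of_hasCompactSupport hφ.continuous hφc]
  refine Finset.sum_congr rfl fun a _ => ?_
  simp_rw [← integral_smul_signedDensity_of_le (hp a) (hn a) hφ.continuous hφc,
    ← integral_const_mul, smul_eq_mul, mul_left_comm]

theorem signedDensity_ae_eq_sum (ν : Measure E) [IsLocallyFiniteMeasure ν]
    [∀ a, IsLocallyFiniteMeasure (p a)] [∀ a, IsLocallyFiniteMeasure (n a)]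
    [IsLocallyFiniteMeasure p₀] [IsLocallyFiniteMeasure n₀]
    (h : ∀ φ : E → ℝ, ContDiff ℝ (⊤ : ℕ∞) φ → HasCompactSupport φ →
      ∫ x, φ x ∂p₀ - ∫ x, φ x ∂n₀ = ∑ a, c a * (∫ x, φ x ∂(p a) - ∫ x, φ x ∂(n a))) :
    signedDensity p₀ n₀ ν =ᵐ[ν] fun x => ∑ a, c a * signedDensity (p a) (n a) ν x := by
  obtain ⟨κ, hκ, hle⟩ := exists_isLocallyFiniteMeasure_forall_le
    (s := {ν, p₀, n₀} ∪ (Set.range p ∪ Set.range n)) (by simp [Set.finite_range])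
    (by rintro _ ((rfl | rfl | rfl) | ⟨a, rfl⟩ | ⟨a, rfl⟩) <;> infer_instance)
  have hpκ (a : ι) : p a ≤ κ := hle _ (by simp)
  have hnκ (a : ι) : n a ≤ κ := hle _ (by simp)
  have hp₀κ : p₀ ≤ κ := hle _ (by simp)
  have hn₀κ : n₀ ≤ κ := hle _ (by simp)
  have hνκ : ν ≪ κ := Measure.absolutelyContinuous_of_le (hle _ (by simp))
  have hchain : ∀ᵐ x ∂ν, ∀ a, signedDensity (p a) (n a) ν x =
      signedDensity (p a) (n a) κ x * (κ.rnDeriv ν x).toReal :=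
    ae_all_iff.2 fun a => signedDensity_ae_eq_mul_rnDeriv ν
      (Measure.absolutelyContinuous_of_le (hpκ a)) (Measure.absolutelyContinuous_of_le (hnκ a))
  have hchain₀ := signedDensity_ae_eq_mul_rnDeriv ν (Measure.absolutelyContinuous_of_le hp₀κ)
    (Measure.absolutelyContinuous_of_le hn₀κ)
  have hrel := hνκ.ae_le (signedDensity_ae_eq_sum_of_le hpκ hnκ hp₀κ hn₀κ h)
  filter_upwards [hchain, hchain₀, hrel] with x hx hx₀ hrelx
  simp_rw [hx₀, hrelx, hx, Finset.sum_mul, mul_assoc]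

end LinearRelation

section LinearChangeOfVariables

variable {E : Type*} [NormedAddCommGroup E] [NormedSpace ℝ E] [FiniteDimensional ℝ E]
  [MeasurableSpace E] [BorelSpace E] (μ : Measure E) [μ.IsAddHaarMeasure] (L : E ≃L[ℝ] E)

theorem map_continuousLinearEquiv_addHaar :
    μ.map L = ENNReal.ofReal |(L : E →L[ℝ] E).det|⁻¹ • μ := by
  rw [← abs_inv]
  exact Measure.map_linearMap_addHaar_eq_smul_addHaar μ L.toLinearEquiv.isUnit_det'.ne_zero

theorem integral_comp_continuousLinearEquiv {G : Type*} [NormedAddCommGroup G] [NormedSpace ℝ G]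
    (g : E → G) : ∫ x, g (L x) ∂μ = |(L : E →L[ℝ] E).det|⁻¹ • ∫ x, g x ∂μ := by
  have hmap : ∫ y, g y ∂(μ.map L) = ∫ x, g (L x) ∂μ :=
    L.toHomeomorph.measurableEmbedding.integral_map g
  rw [← hmap, map_continuousLinearEquiv_addHaar, integral_smul_measure,
    ENNReal.toReal_ofReal (inv_nonneg.2 (abs_nonneg _))]

theorem quasiMeasurePreserving_continuousLinearEquiv_addHaar :
    Measure.QuasiMeasurePreserving L μ μ :=
  Measure.ContinuousLinearMap.quasiMeasurePreserving μ L L.toLinearEquiv.isUnit_det'.ne_zero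

theorem rnDeriv_map_continuousLinearEquiv_addHaar (m : Measure E) [SigmaFinite m] :
    ∀ᵐ x ∂μ, (m.map L).rnDeriv μ (L x) =
      ENNReal.ofReal |(L : E →L[ℝ] E).det|⁻¹ * m.rnDeriv μ x := by
  have hL : MeasurableEmbedding L := L.toHomeomorph.measurableEmbedding
  have := hL.sigmaFinite_map (μ := m)
  set r := ENNReal.ofReal |(L : E →L[ℝ] E).det|⁻¹ with hr_def
  have hr : r ≠ 0 := (ENNReal.ofReal_pos.2
    (inv_pos.2 (abs_pos.2 L.toLinearEquiv.isUnit_det'.ne_zero))).ne'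
  have hpush := hL.rnDeriv_map m μ
  have hscale := (quasiMeasurePreserving_continuousLinearEquiv_addHaar μ L).ae
    (Measure.rnDeriv_smul_right_of_ne_top' (m.map L) μ hr ENNReal.ofReal_ne_top)
  rw [map_continuousLinearEquiv_addHaar μ, ← hr_def] at hpush
  filter_upwards [hpush, hscale] with x hpushx hscalex
  rw [← hpushx, hscalex, Pi.smul_apply, smul_eq_mul,
    ENNReal.mul_inv_cancel_left hr ENNReal.ofReal_ne_top]

theorem signedDensity_map_continuousLinearEquiv_addHaar (p n : Measure E) [SigmaFinite p]
    [SigmaFinite n] :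
    ∀ᵐ x ∂μ, signedDensity (p.map L) (n.map L) μ (L x) =
      |(L : E →L[ℝ] E).det|⁻¹ * signedDensity p n μ x := by
  filter_upwards [rnDeriv_map_continuousLinearEquiv_addHaar μ L p,
    rnDeriv_map_continuousLinearEquiv_addHaar μ L n] with x hpx hnx
  simp only [signedDensity, hpx, hnx, ENNReal.toReal_mul, mul_sub,
    ENNReal.toReal_ofReal (inv_nonneg.2 (abs_nonneg _))]

end LinearChangeOfVariables

section Matrices

variable {ι : Type*} [Fintype ι]

theorem transpose_mul_mul_apply {R κ m n : Type*} [CommSemiring R] [Fintype κ]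
    (S : Matrix ι m R) (A : Matrix ι κ R) (T : Matrix κ n R) (i : m) (j : n) :
    (S.transpose * A * T) i j = ∑ q : ι × κ, S q.1 i * T q.2 j * A q.1 q.2 := by
  simp only [Matrix.mul_apply, Matrix.transpose_apply, Finset.sum_mul]
  rw [Finset.sum_comm, Fintype.sum_prod_type]
  simp only [mul_right_comm]

variable [DecidableEq ι]

theorem toEuclideanCLM_single (S : Matrix ι ι ℝ) (i : ι) :
    Matrix.toEuclideanCLM (𝕜 := ℝ) S (EuclideanSpace.single i 1) =
      ∑ k, S k i • EuclideanSpace.single k (1 : ℝ) := by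
  ext k
  simp [Matrix.ofLp_toEuclideanCLM, Pi.single_apply]

theorem det_toEuclideanCLM (S : Matrix ι ι ℝ) :
    (Matrix.toEuclideanCLM (𝕜 := ℝ) S).det = S.det :=
  LinearMap.det_toLin (PiLp.basisFun 2 ℝ ι) S

/-- The change of variables `x ↦ S x` of an invertible matrix `S`, as an automorphism of Euclidean
space. -/
noncomputable def toEuclideanCLE (S : Matrix ι ι ℝ) (hS : IsUnit S.det) :
    EuclideanSpace ℝ ι ≃L[ℝ] EuclideanSpace ℝ ι :=
  (Matrix.toEuclideanCLM (𝕜 := ℝ) S).toContinuousLinearEquivOfDetNeZero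
    ((det_toEuclideanCLM S).trans_ne hS.ne_zero)

theorem toEuclideanCLE_apply (S : Matrix ι ι ℝ) (hS : IsUnit S.det) (x : EuclideanSpace ℝ ι) :
    toEuclideanCLE S hS x = WithLp.toLp 2 (S.mulVec x) :=
  rfl

theorem det_toEuclideanCLE (S : Matrix ι ι ℝ) (hS : IsUnit S.det) :
    (toEuclideanCLE S hS : EuclideanSpace ℝ ι →L[ℝ] EuclideanSpace ℝ ι).det = S.det :=
  det_toEuclideanCLM S

end Matrices

section SecondPartial

theorem fderiv_fderiv_comp_continuousLinearMap {E F G : Type*} [NormedAddCommGroup E]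
    [NormedSpace ℝ E] [NormedAddCommGroup F] [NormedSpace ℝ F] [NormedAddCommGroup G]
    [NormedSpace ℝ G] {φ : F → G} (hφ : ContDiff ℝ 2 φ) (L : E →L[ℝ] F) (x u v : E) :
    fderiv ℝ (fderiv ℝ (φ ∘ L)) x u v = fderiv ℝ (fderiv ℝ φ) (L x) (L u) (L v) := by
  simpa [iteratedFDeriv_two_apply] using
    congr($(L.iteratedFDeriv_comp_right hφ x le_rfl) ![u, v])

variable {d : ℕ} {φ : EuclideanSpace ℝ (Fin d) → ℝ}

theorem secondPartial_eq_fderiv_fderiv (hφ : ContDiff ℝ 2 φ) (i j : Fin d)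
    (x : EuclideanSpace ℝ (Fin d)) :
    secondPartial d φ i j x =
      fderiv ℝ (fderiv ℝ φ) x (EuclideanSpace.single i 1) (EuclideanSpace.single j 1) := by
  have hdiff : Differentiable ℝ (fderiv ℝ φ) :=
    (hφ.fderiv_right (m := 1) (by norm_num)).differentiable one_ne_zero
  rw [secondPartial, fderiv_clm_apply (hdiff x) (differentiableAt_const _)]
  simp

theorem continuous_secondPartial (hφ : ContDiff ℝ 2 φ) (i j : Fin d) :
    Continuous (secondPartial d φ i j) := by
  have hcont : Continuous (fderiv ℝ (fderiv ℝ φ)) :=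
    (hφ.fderiv_right (m := 1) (by norm_num)).continuous_fderiv one_ne_zero
  rw [funext (secondPartial_eq_fderiv_fderiv hφ i j)]
  exact (hcont.clm_apply continuous_const).clm_apply continuous_const

theorem hasCompactSupport_secondPartial (hφ : HasCompactSupport φ) (i j : Fin d) :
    HasCompactSupport (secondPartial d φ i j) :=
  (hφ.fderiv_apply ℝ _).fderiv_apply ℝ _

theorem secondPartial_comp_toEuclideanCLM (hφ : ContDiff ℝ 2 φ) (S : Matrix (Fin d) (Fin d) ℝ)
    (i j : Fin d) (x : EuclideanSpace ℝ (Fin d)) :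
    secondPartial d (φ ∘ Matrix.toEuclideanCLM (𝕜 := ℝ) S) i j x =
      ∑ q : Fin d × Fin d, S q.1 i * S q.2 j *
        secondPartial d φ q.1 q.2 (Matrix.toEuclideanCLM (𝕜 := ℝ) S x) := by
  rw [secondPartial_eq_fderiv_fderiv (hφ.comp (ContinuousLinearMap.contDiff _)),
    fderiv_fderiv_comp_continuousLinearMap hφ, toEuclideanCLM_single, toEuclideanCLM_single]
  simp only [secondPartial_eq_fderiv_fderiv hφ, map_sum, map_smul, sum_apply, smul_apply,
    smul_eq_mul, Finset.mul_sum, Fintype.sum_prod_type, mul_assoc]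
  rw [Finset.sum_comm]
  simp only [mul_left_comm]

end SecondPartial

section SecondDerivMeasures

variable {d : ℕ} {f φ : EuclideanSpace ℝ (Fin d) → ℝ} {S : Matrix (Fin d) (Fin d) ℝ}

theorem integral_comp_mul_secondPartial_comp (hf : LocallyIntegrable f) (hS : IsUnit S.det)
    (hφ : ContDiff ℝ 2 φ) (hφc : HasCompactSupport φ) (i j : Fin d) :
    ∫ x, f (toEuclideanCLE S hS x) * secondPartial d (φ ∘ toEuclideanCLE S hS) i j x =
      ∑ q : Fin d × Fin d, |S.det|⁻¹ * (S q.1 i * S q.2 j) *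
        ∫ x, f x * secondPartial d φ q.1 q.2 x := by
  set L := toEuclideanCLE S hS
  have hint (q : Fin d × Fin d) :
      Integrable fun y => S q.1 i * S q.2 j * (f y * secondPartial d φ q.1 q.2 y) :=
    (hf.integrable_smul_right_of_hasCompactSupport (continuous_secondPartial hφ q.1 q.2)
      (hasCompactSupport_secondPartial hφc q.1 q.2)).const_mul _
  have hchain (x : EuclideanSpace ℝ (Fin d)) : secondPartial d (φ ∘ L) i j x =
      ∑ q : Fin d × Fin d, S q.1 i * S q.2 j * secondPartial d φ q.1 q.2 (L x) :=
    secondPartial_comp_toEuclideanCLM hφ S i j x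
  calc ∫ x, f (L x) * secondPartial d (φ ∘ L) i j x
      = ∫ x, ∑ q : Fin d × Fin d,
          S q.1 i * S q.2 j * (f (L x) * secondPartial d φ q.1 q.2 (L x)) := by
        simp only [hchain, Finset.mul_sum, mul_left_comm (f _)]
    _ = |S.det|⁻¹ *
          ∫ y, ∑ q : Fin d × Fin d, S q.1 i * S q.2 j * (f y * secondPartial d φ q.1 q.2 y) := by
        rw [← det_toEuclideanCLE S hS]
        exact integral_comp_continuousLinearEquiv volume L fun y =>
          ∑ q : Fin d × Fin d, S q.1 i * S q.2 j * (f y * secondPartial d φ q.1 q.2 y)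
    _ = ∑ q : Fin d × Fin d, |S.det|⁻¹ * (S q.1 i * S q.2 j) *
          ∫ y, f y * secondPartial d φ q.1 q.2 y := by
        simp_rw [integral_finsetSum _ fun q _ => hint q, integral_const_mul, Finset.mul_sum,
          mul_assoc]

theorem densityMatrix_apply (μp μn : Fin d → Fin d → Measure (EuclideanSpace ℝ (Fin d)))
    (x : EuclideanSpace ℝ (Fin d)) (i j : Fin d) :
    densityMatrix d μp μn x i j = signedDensity (μp i j) (μn i j) volume x :=
  rfl

namespace IsSecondDerivMeasures

variable {μp μn μSp μSn : Fin d → Fin d → Measure (EuclideanSpace ℝ (Fin d))}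

theorem integral_map_sub_integral_map (hμ : IsSecondDerivMeasures d f μp μn)
    (hf : LocallyIntegrable f) (hS : IsUnit S.det)
    (hμS : IsSecondDerivMeasures d (fun x => f (toEuclideanCLE S hS x)) μSp μSn)
    (i j : Fin d) (hφ : ContDiff ℝ (⊤ : ℕ∞) φ) (hφc : HasCompactSupport φ) :
    ∫ x, φ x ∂((μSp i j).map (toEuclideanCLE S hS)) -
        ∫ x, φ x ∂((μSn i j).map (toEuclideanCLE S hS)) =
      ∑ q : Fin d × Fin d, |S.det|⁻¹ * (S q.1 i * S q.2 j) *
        (∫ x, φ x ∂(μp q.1 q.2) - ∫ x, φ x ∂(μn q.1 q.2)) := by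
  set L := toEuclideanCLE S hS
  have hL : MeasurableEmbedding L := L.toHomeomorph.measurableEmbedding
  have hcomp := hμS.2.2 i j (φ ∘ L) (hφ.comp L.contDiff) (hφc.comp_homeomorph L.toHomeomorph)
  rw [hL.integral_map, hL.integral_map]
  simp_rw [hμ.2.2 _ _ φ hφ hφc]
  exact hcomp.trans (integral_comp_mul_secondPartial_comp hf hS (hφ.of_le (by norm_cast)) hφc i j)

theorem ae_densityMatrix_apply_eq_sum (hμ : IsSecondDerivMeasures d f μp μn)
    (hf : LocallyIntegrable f) (hS : IsUnit S.det)
    (hμS : IsSecondDerivMeasures d (fun x => f (toEuclideanCLE S hS x)) μSp μSn) (i j : Fin d) :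
    ∀ᵐ x, densityMatrix d μSp μSn x i j =
      ∑ q : Fin d × Fin d, S q.1 i * S q.2 j *
        densityMatrix d μp μn (toEuclideanCLE S hS x) q.1 q.2 := by
  set L := toEuclideanCLE S hS
  have ⟨_, _, _⟩ := hμ
  have ⟨_, _, _⟩ := hμS
  have hLf (m : Measure (EuclideanSpace ℝ (Fin d))) [IsLocallyFiniteMeasure m] :
      IsLocallyFiniteMeasure (m.map L) :=
    have : IsFiniteMeasureOnCompacts (m.map L) :=
      Measure.IsFiniteMeasureOnCompacts.map m L.toHomeomorph
    isLocallyFiniteMeasure_of_isFiniteMeasureOnCompacts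
  have hrel : signedDensity ((μSp i j).map L) ((μSn i j).map L) volume =ᵐ[volume] fun y =>
      ∑ q : Fin d × Fin d, |S.det|⁻¹ * (S q.1 i * S q.2 j) *
        signedDensity (μp q.1 q.2) (μn q.1 q.2) volume y :=
    signedDensity_ae_eq_sum volume fun φ hφ hφc =>
      hμ.integral_map_sub_integral_map hf hS hμS i j hφ hφc
  filter_upwards [(quasiMeasurePreserving_continuousLinearEquiv_addHaar volume L).ae hrel,
    signedDensity_map_continuousLinearEquiv_addHaar volume L (μSp i j) (μSn i j)] with x hx hmap
  rw [hmap, det_toEuclideanCLE] at hx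
  simp_rw [mul_assoc, ← Finset.mul_sum] at hx
  simpa only [densityMatrix_apply, mul_assoc] using
    mul_left_cancel₀ (inv_ne_zero (abs_ne_zero.2 hS.ne_zero)) hx

end IsSecondDerivMeasures

end SecondDerivMeasures

theorem density_matrix_change_of_variables_general (d : ℕ)
    (f : EuclideanSpace ℝ (Fin d) → ℝ) (hf : LocallyIntegrable f)
    (S : Matrix (Fin d) (Fin d) ℝ) (hS : IsUnit S.det)
    (μp μn μSp μSn : Fin d → Fin d → Measure (EuclideanSpace ℝ (Fin d)))
    (hμ : IsSecondDerivMeasures d f μp μn)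
    (hμS : IsSecondDerivMeasures d
      (fun x => f (WithLp.toLp 2 (S.mulVec x) : EuclideanSpace ℝ (Fin d))) μSp μSn) :
    ∀ᵐ x ∂(volume : Measure (EuclideanSpace ℝ (Fin d))),
      densityMatrix d μSp μSn x =
        S.transpose *
          densityMatrix d μp μn (WithLp.toLp 2 (S.mulVec x) : EuclideanSpace ℝ (Fin d)) * S := by
  have hentry := ae_all_iff.2 fun i => ae_all_iff.2 fun j =>
    hμ.ae_densityMatrix_apply_eq_sum hf hS hμS i j
  filter_upwards [hentry] with x hx
  ext i j
  rw [hx i j, transpose_mul_mul_apply, toEuclideanCLE_apply]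

theorem density_matrix_change_of_variables (d : ℕ)
    (f : EuclideanSpace ℝ (Fin d) → ℝ) (hf : ConvexOn ℝ Set.univ f)
    (S : Matrix (Fin d) (Fin d) ℝ) (hS : IsUnit S.det)
    (μp μn μSp μSn : Fin d → Fin d → Measure (EuclideanSpace ℝ (Fin d)))
    (hμ : IsSecondDerivMeasures d f μp μn)
    (hμS : IsSecondDerivMeasures d
      (fun x => f (WithLp.toLp 2 (S.mulVec x) : EuclideanSpace ℝ (Fin d))) μSp μSn) :
    ∀ᵐ x ∂(volume : Measure (EuclideanSpace ℝ (Fin d))),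
      densityMatrix d μSp μSn x =
        S.transpose *
          densityMatrix d μp μn (WithLp.toLp 2 (S.mulVec x) : EuclideanSpace ℝ (Fin d)) * S :=
  density_matrix_change_of_variables_general d f
    (continuousOn_univ.1 (hf.continuousOn isOpen_univ)).locallyIntegrable S hS μp μn μSp μSn hμ hμS
end

section
/- Let f : ℝ^d → ℝ be a convex function of at most linear growth, S an invertible d × d real matrix, and Q(x) the matrix of Radon–Nikodym derivatives of the absolutely continuous parts of the second derivative measures of f. Then for Lebesgue-almost every x ∈ ℝ^d: lim_{t → 0⁺} (1/t)(∫_{ℝ^d} f(x + S y) φ_t(y) dy − f(x)) = (1/2) tr(Sᵀ Q(x) S), where φ_t(y) = (2πt)^{−d/2} exp(−‖y‖²/(2t)). -/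
open MeasureTheory Filter Metric
open scoped Topology ENNReal NNReal

/-- The `d`-dimensional Gaussian heat kernel `φ_t`. -/
noncomputable def heatKernel (d : ℕ) (t : ℝ) (y : EuclideanSpace ℝ (Fin d)) : ℝ :=
  (2 * Real.pi * t) ^ (-(d : ℝ) / 2) * Real.exp (-‖y‖ ^ 2 / (2 * t))

/-!
By the Gaussian tail bound, the part of the heat average of `f` around `x` that lies outside a fixed
ellipsoid is `o(t)`, so the heat kernel may be multiplied by a smooth radial cutoff. The truncated
average `v(t)` tends to `f x` at Lebesgue points, and by the heat equation
`v'(t) = ½ ∫ f Δ_S(χ K_t) + o(1)`, the error coming from derivatives of the cutoff. Testing the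
second derivative measures against `χ K_t` turns the integral into `tr(Sᵀ (∫ χ K_t dμ) S)`, which
tends to `tr(Sᵀ Q(x) S)` by differentiation of measures along ellipsoids: a decreasing radial kernel
is a superposition of indicators of ellipsoids. L'Hôpital's rule concludes.
-/

/-- A family of profiles on `[0, ∞)`, supported in `[0, R]`, whose derivatives concentrate at `0`
along `l`. Composed with a squared norm, and normalized, they form an approximate identity. -/
structure IsRadialPeak {ι : Type*} (l : Filter ι) (R : ℝ) (k : ι → ℝ → ℝ) : Prop where
  contDiff : ∀ i, ContDiff ℝ 1 (k i)
  eq_zero_of_le : ∀ i u, R ≤ u → k i u = 0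
  eventually_antitone : ∀ᶠ i in l, Antitone (k i)
  tendstoUniformlyOn_deriv :
    ∀ δ > 0, TendstoUniformlyOn (fun i => deriv (k i)) 0 l (Set.Ici δ)

lemma IsRadialPeak.const_mul {ι : Type*} {l : Filter ι} {R : ℝ} {k : ι → ℝ → ℝ}
    (hk : IsRadialPeak l R k) {c : ℝ} (hc : 0 ≤ c) :
    IsRadialPeak l R fun i u => c * k i u where
  contDiff i := contDiff_const.mul (hk.contDiff i)
  eq_zero_of_le i u hu := by rw [hk.eq_zero_of_le i u hu, mul_zero]
  eventually_antitone := hk.eventually_antitone.mono fun i hi => hi.const_mul hc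
  tendstoUniformlyOn_deriv δ hδ := by
    have hderiv : (fun i => deriv fun u => c * k i u) = fun i => (c * ·) ∘ deriv (k i) := by
      ext i u
      simp
    have hzero : (0 : ℝ → ℝ) = (c * ·) ∘ (0 : ℝ → ℝ) := by
      ext
      simp
    rw [hderiv, hzero]
    exact (uniformContinuous_const_smul c).comp_tendstoUniformlyOn
      (hk.tendstoUniformlyOn_deriv δ hδ)

section LayerCake

variable {α : Type*} [MeasurableSpace α] {μ ν : Measure α} {N : α → ℝ} {R : ℝ}

lemma setIntegral_indicator_Ici_deriv {k : ℝ → ℝ} (hk : ContDiff ℝ 1 k) {u : ℝ} (hu0 : 0 ≤ u)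
    (huR : u ≤ R) :
    ∫ r in Set.Icc 0 R, (Set.Ici u).indicator (fun r => -deriv k r) r = k u - k R := by
  have hsub : Set.Icc 0 R ∩ Set.Ici u = Set.Icc u R := by
    ext r
    simp only [Set.mem_inter_iff, Set.mem_Icc, Set.mem_Ici]
    grind
  rw [setIntegral_indicator measurableSet_Ici, hsub, integral_Icc_eq_integral_Ioc,
    ← intervalIntegral.integral_of_le huR, intervalIntegral.integral_neg,
    intervalIntegral.integral_deriv_eq_sub' k rfl
      (fun _ _ => (hk.differentiable one_ne_zero).differentiableAt)
      (hk.continuous_deriv le_rfl).continuousOn, neg_sub]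

lemma setIntegral_indicator_Ici_comp (hN : Measurable N) {r : ℝ} (hr : r ≤ R) (c : ℝ) :
    ∫ a in {a | N a ≤ R}, (Set.Ici (N a)).indicator (fun _ => c) r ∂μ =
      c * μ.real {a | N a ≤ r} := by
  have hind : (fun a => (Set.Ici (N a)).indicator (fun _ => c) r) =
      {a | N a ≤ r}.indicator fun _ => c := by
    ext a
    simp [Set.indicator_apply]
  have hsub : {a | N a ≤ R} ∩ {a | N a ≤ r} = {a | N a ≤ r} :=
    Set.inter_eq_self_of_subset_right fun a ha => ha.trans hr
  rw [hind, setIntegral_indicator (measurableSet_le hN measurable_const), hsub, setIntegral_const,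
    smul_eq_mul, mul_comm]

lemma integral_comp_eq_setIntegral_deriv_mul_measureReal (hN : Measurable N)
    (hN0 : ∀ a, 0 ≤ N a) (hμ : μ {a | N a ≤ R} ≠ ∞) {k : ℝ → ℝ} (hk : ContDiff ℝ 1 k)
    (hkR : ∀ u, R ≤ u → k u = 0) :
    ∫ a, k (N a) ∂μ = ∫ r in Set.Ioc 0 R, -deriv k r * μ.real {a | N a ≤ r} := by
  have hA : MeasurableSet {a | N a ≤ R} := measurableSet_le hN measurable_const
  have : IsFiniteMeasure (μ.restrict {a | N a ≤ R}) := isFiniteMeasure_restrict.2 hμ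
  have hk' : Continuous (deriv k) := hk.continuous_deriv le_rfl
  obtain ⟨C, hC⟩ := (isCompact_Icc (a := 0) (b := R)).exists_bound_of_continuousOn
    hk'.neg.continuousOn
  have hint : Integrable (Function.uncurry fun a r =>
      (Set.Ici (N a)).indicator (fun r => -deriv k r) r)
      ((μ.restrict {a | N a ≤ R}).prod (volume.restrict (Set.Icc 0 R))) := by
    have hmeas : Measurable (Function.uncurry fun a r =>
        (Set.Ici (N a)).indicator (fun r => -deriv k r) r) :=
      (hk'.neg.measurable.comp measurable_snd).indicator
        (measurableSet_le (hN.comp measurable_fst) measurable_snd)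
    refine .of_bound hmeas.aestronglyMeasurable C ?_
    filter_upwards [Measure.quasiMeasurePreserving_snd.ae
      (ae_restrict_mem measurableSet_Icc)] with p hp
    exact (norm_indicator_le_norm_self _ _).trans (hC _ hp)
  calc ∫ a, k (N a) ∂μ = ∫ a in {a | N a ≤ R}, k (N a) ∂μ :=
        (setIntegral_eq_integral_of_forall_compl_eq_zero fun a ha =>
          hkR _ (not_le.1 ha).le).symm
    _ = ∫ a in {a | N a ≤ R}, (∫ r in Set.Icc 0 R,
          (Set.Ici (N a)).indicator (fun r => -deriv k r) r) ∂μ :=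
        setIntegral_congr_fun hA fun a ha => by
          rw [setIntegral_indicator_Ici_deriv hk (hN0 a) ha, hkR R le_rfl, sub_zero]
    _ = ∫ r in Set.Icc 0 R, (∫ a in {a | N a ≤ R},
          (Set.Ici (N a)).indicator (fun r => -deriv k r) r ∂μ) := integral_integral_swap hint
    _ = ∫ r in Set.Icc 0 R, -deriv k r * μ.real {a | N a ≤ r} :=
        setIntegral_congr_fun measurableSet_Icc fun r hr =>
          setIntegral_indicator_Ici_comp hN hr.2 (-deriv k r)
    _ = ∫ r in Set.Ioc 0 R, -deriv k r * μ.real {a | N a ≤ r} := integral_Icc_eq_integral_Ioc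

lemma measure_sublevel_ne_top (hμ : μ {a | N a ≤ R} ≠ ∞) {r : ℝ} (hr : r ≤ R) :
    μ {a | N a ≤ r} ≠ ∞ :=
  ne_top_of_le_ne_top hμ (measure_mono fun _ ha => le_trans ha hr)

lemma monotoneOn_measureReal_sublevel (hμ : μ {a | N a ≤ R} ≠ ∞) :
    MonotoneOn (fun r => μ.real {a | N a ≤ r}) (Set.Ioc 0 R) := fun _ _ _ hr' h =>
  measureReal_mono (fun _ ha => le_trans ha h) (measure_sublevel_ne_top hμ hr'.2)

lemma integrableOn_measureReal_sublevel_ratio {q : ℝ} (hμ : μ {a | N a ≤ R} ≠ ∞)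
    (hν : ν {a | N a ≤ R} ≠ ∞) (hν0 : ∀ r, 0 < r → ν {a | N a ≤ r} ≠ 0)
    (hq : Tendsto (fun r => μ.real {a | N a ≤ r} / ν.real {a | N a ≤ r}) (𝓝[>] 0) (𝓝 q)) :
    IntegrableOn (fun r => μ.real {a | N a ≤ r} / ν.real {a | N a ≤ r}) (Set.Ioc 0 R) := by
  obtain ⟨δ, hδ, hnear⟩ : ∃ δ > 0, ∀ r ∈ Set.Ioo 0 δ,
      μ.real {a | N a ≤ r} / ν.real {a | N a ≤ r} < q + 1 :=
    mem_nhdsGT_iff_exists_Ioo_subset.1 (hq.eventually_lt_const (lt_add_one q))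
  have hmeas : AEMeasurable (fun r => μ.real {a | N a ≤ r} / ν.real {a | N a ≤ r})
      (volume.restrict (Set.Ioc 0 R)) :=
    (aemeasurable_restrict_of_monotoneOn measurableSet_Ioc (monotoneOn_measureReal_sublevel hμ)).div
      (aemeasurable_restrict_of_monotoneOn measurableSet_Ioc (monotoneOn_measureReal_sublevel hν))
  refine Integrable.of_bound hmeas.aestronglyMeasurable
    (max (q + 1) (μ.real {a | N a ≤ R} / ν.real {a | N a ≤ δ})) ?_
  filter_upwards [ae_restrict_mem measurableSet_Ioc] with r hr
  rw [Real.norm_of_nonneg (by positivity)]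
  rcases lt_or_ge r δ with h | h
  · exact (hnear r ⟨hr.1, h⟩).le.trans (le_max_left _ _)
  · refine le_trans ?_ (le_max_right _ _)
    have hδR : δ ∈ Set.Ioc 0 R := ⟨hδ, h.trans hr.2⟩
    have hpos : 0 < ν.real {a | N a ≤ δ} :=
      ENNReal.toReal_pos (hν0 δ hδ) (measure_sublevel_ne_top hν hδR.2)
    exact div_le_div₀ measureReal_nonneg
      (monotoneOn_measureReal_sublevel hμ hr ⟨hr.1.trans_le hr.2, le_rfl⟩ hr.2) hpos
      (monotoneOn_measureReal_sublevel hν hδR hr h)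

lemma tendstoUniformlyOn_neg_mul_measureReal_sublevel {ι : Type*} {l : Filter ι} {κ : ι → ℝ → ℝ}
    (hν : ν {a | N a ≤ R} ≠ ∞) (hκ : ∀ δ > 0, TendstoUniformlyOn κ 0 l (Set.Ici δ)) {u : Set ℝ}
    (hu : IsOpen u) (h0u : 0 ∈ u) :
    TendstoUniformlyOn (fun i r => -κ i r * ν.real {a | N a ≤ r}) 0 l (Set.Ioc 0 R \ u) := by
  obtain ⟨δ, hδ, hsub⟩ := Metric.isOpen_iff.1 hu 0 h0u
  rw [Metric.tendstoUniformlyOn_iff]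
  intro ε hε
  filter_upwards [Metric.tendstoUniformlyOn_iff.1 (hκ δ hδ)
    (ε / (ν.real {a | N a ≤ R} + 1)) (by positivity)] with i hi r hr
  have hδr : δ ≤ r := not_lt.1 fun h => hr.2 (hsub (by
    rwa [mem_ball, Real.dist_0_eq_abs, abs_of_pos hr.1.1]))
  have hir := hi r hδr
  have hVR : ν.real {a | N a ≤ r} ≤ ν.real {a | N a ≤ R} :=
    measureReal_mono (fun a ha => le_trans ha hr.1.2) hν
  rw [Pi.zero_apply, dist_zero_left] at hir ⊢
  rw [norm_mul, norm_neg, Real.norm_of_nonneg measureReal_nonneg]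
  calc ‖κ i r‖ * ν.real {a | N a ≤ r}
      ≤ ‖κ i r‖ * (ν.real {a | N a ≤ R} + 1) := by
        gcongr
        linarith
    _ < ε := (lt_div_iff₀ (by positivity)).1 hir

/-- By the layer-cake formula, the integral of `k (N a)` is an average of the measures of the
sublevel sets of `N`, with weight `-k'`; the hypotheses make these weights concentrate at `0`. -/
lemma tendsto_integral_comp_of_tendsto_sublevel_ratio {ι : Type*} {l : Filter ι} {k : ι → ℝ → ℝ}
    {q : ℝ} (hN : Measurable N) (hN0 : ∀ a, 0 ≤ N a) (hμ : μ {a | N a ≤ R} ≠ ∞)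
    (hν : ν {a | N a ≤ R} ≠ ∞) (hν0 : ∀ r, 0 < r → ν {a | N a ≤ r} ≠ 0)
    (hq : Tendsto (fun r => μ.real {a | N a ≤ r} / ν.real {a | N a ≤ r}) (𝓝[>] 0) (𝓝 q))
    (hk : IsRadialPeak l R k) (hone : Tendsto (fun i => ∫ a, k i (N a) ∂ν) l (𝓝 1)) :
    Tendsto (fun i => ∫ a, k i (N a) ∂μ) l (𝓝 q) := by
  have hV : ∀ r ∈ Set.Ioc 0 R, ν.real {a | N a ≤ r} ≠ 0 := fun r hr =>
    (measureReal_ne_zero_iff (measure_sublevel_ne_top hν hr.2)).2 (hν0 r hr.1)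
  have hpeak := tendsto_setIntegral_peak_smul_of_integrableOn_of_tendsto (μ := volume)
    (s := Set.Ioc 0 R) (t := Set.Ioc 0 R) (x₀ := 0) (l := l) (a := q)
    (φ := fun i r => -deriv (k i) r * ν.real {a | N a ≤ r})
    (g := fun r => μ.real {a | N a ≤ r} / ν.real {a | N a ≤ r})
    measurableSet_Ioc measurableSet_Ioc subset_rfl self_mem_nhdsWithin measure_Ioc_lt_top.ne
    (hk.eventually_antitone.mono fun i hi r _ =>
      mul_nonneg (neg_nonneg.2 hi.deriv_nonpos) measureReal_nonneg) ?_ ?_ ?_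
    (integrableOn_measureReal_sublevel_ratio hμ hν hν0 hq)
    (hq.mono_left (nhdsWithin_mono _ Set.Ioc_subset_Ioi_self))
  · refine hpeak.congr fun i => ?_
    rw [integral_comp_eq_setIntegral_deriv_mul_measureReal hN hN0 hμ (hk.contDiff i)
      (hk.eq_zero_of_le i)]
    refine setIntegral_congr_fun measurableSet_Ioc fun r hr => ?_
    simp only [smul_eq_mul]
    rw [mul_assoc, mul_div_cancel₀ _ (hV r hr)]
  · exact fun u hu h0u => tendstoUniformlyOn_neg_mul_measureReal_sublevel hν
      hk.tendstoUniformlyOn_deriv hu h0u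
  · exact hone.congr fun i =>
      integral_comp_eq_setIntegral_deriv_mul_measureReal hN hN0 hν (hk.contDiff i)
        (hk.eq_zero_of_le i)
  · exact .of_forall fun i => AEStronglyMeasurable.mul
      ((hk.contDiff i).continuous_deriv le_rfl).neg.aestronglyMeasurable
      (aemeasurable_restrict_of_monotoneOn measurableSet_Ioc
        (monotoneOn_measureReal_sublevel hν)).aestronglyMeasurable

end LayerCake

lemma isLocallyFiniteMeasure_map_homeomorph {X Y : Type*} [TopologicalSpace X]
    [MeasurableSpace X] [BorelSpace X] [TopologicalSpace Y] [MeasurableSpace Y] [BorelSpace Y]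
    (e : X ≃ₜ Y) (μ : Measure X) [IsLocallyFiniteMeasure μ] :
    IsLocallyFiniteMeasure (μ.map e) where
  finiteAtNhds y := by
    obtain ⟨s, hs, hμs⟩ := μ.finiteAt_nhds (e.symm y)
    refine ⟨e.symm ⁻¹' s, e.symm.continuous.continuousAt hs, ?_⟩
    rwa [e.measurableEmbedding.map_apply, ← Set.preimage_comp, e.symm_comp_self, Set.preimage_id]

lemma ae_tendsto_rnDeriv_preimage_closedBall {X Y : Type*} [TopologicalSpace X]
    [SecondCountableTopology X] [MeasurableSpace X] [BorelSpace X] [MetricSpace Y]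
    [SecondCountableTopology Y] [HasBesicovitchCovering Y] [MeasurableSpace Y] [BorelSpace Y]
    (e : X ≃ₜ Y) (μ ν : Measure X) [IsLocallyFiniteMeasure μ] [IsLocallyFiniteMeasure ν] :
    ∀ᵐ x ∂ν, Tendsto
      (fun r => μ (e ⁻¹' closedBall (e x) r) / ν (e ⁻¹' closedBall (e x) r)) (𝓝[>] 0)
      (𝓝 (μ.rnDeriv ν x)) := by
  have := isLocallyFiniteMeasure_map_homeomorph e μ
  have := isLocallyFiniteMeasure_map_homeomorph e ν
  have hY := ae_of_ae_map e.measurable.aemeasurable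
    (Besicovitch.ae_tendsto_rnDeriv (μ.map e) (ν.map e))
  filter_upwards [hY, e.measurableEmbedding.rnDeriv_map μ ν] with x hx hmap
  simpa only [e.measurableEmbedding.map_apply, hmap] using hx

section EllipsoidalKernel

variable {E : Type*} [NormedAddCommGroup E] [InnerProductSpace ℝ E]

/-- The density at `z` of the image of the measure `F (‖y‖ ^ 2) dy` under the map `y ↦ x + L y`.
The sets on which it is constant are ellipsoids centred at `x`. -/
noncomputable def ellipsoidalKernel (L : E ≃L[ℝ] E) (x : E) (F : ℝ → ℝ) (z : E) : ℝ :=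
  |LinearMap.det (L : E →ₗ[ℝ] E)|⁻¹ * F (‖L.symm (z - x)‖ ^ 2)

lemma setOf_norm_symm_sub_sq_le (L : E ≃L[ℝ] E) (x : E) {r : ℝ} (hr : 0 ≤ r) :
    {z | ‖L.symm (z - x)‖ ^ 2 ≤ r} = L.symm ⁻¹' closedBall (L.symm x) √r := by
  ext z
  rw [Set.mem_ofPred_eq, Set.mem_preimage, mem_closedBall, dist_eq_norm, ← map_sub,
    Real.le_sqrt (norm_nonneg _) hr]

lemma isCompact_setOf_norm_symm_sub_sq_le [FiniteDimensional ℝ E] (L : E ≃L[ℝ] E) (x : E) {r : ℝ}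
    (hr : 0 ≤ r) : IsCompact {z | ‖L.symm (z - x)‖ ^ 2 ≤ r} := by
  rw [setOf_norm_symm_sub_sq_le L x hr]
  exact L.symm.toHomeomorph.isCompact_preimage.2 (isCompact_closedBall _ _)

lemma continuous_ellipsoidalKernel (L : E ≃L[ℝ] E) (x : E) {F : ℝ → ℝ} (hF : Continuous F) :
    Continuous (ellipsoidalKernel L x F) := by
  unfold ellipsoidalKernel
  fun_prop

lemma hasCompactSupport_ellipsoidalKernel [FiniteDimensional ℝ E] (L : E ≃L[ℝ] E) (x : E)
    {F : ℝ → ℝ} {R : ℝ} (hR : 0 ≤ R) (hF : ∀ u, R ≤ u → F u = 0) :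
    HasCompactSupport (ellipsoidalKernel L x F) := by
  refine HasCompactSupport.intro (isCompact_setOf_norm_symm_sub_sq_le L x hR) fun z hz => ?_
  rw [ellipsoidalKernel, hF _ (not_le.1 hz).le, mul_zero]

variable [FiniteDimensional ℝ E] [MeasurableSpace E] [BorelSpace E]

lemma integral_mul_ellipsoidalKernel (L : E ≃L[ℝ] E) (x : E) (F : ℝ → ℝ) (f : E → ℝ) :
    ∫ z, f z * ellipsoidalKernel L x F z = ∫ y, f (x + L y) * F (‖y‖ ^ 2) := by
  have hdet : LinearMap.det (L : E →ₗ[ℝ] E) ≠ 0 :=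
    (LinearEquiv.isUnit_det' L.toLinearEquiv).ne_zero
  have hmap : volume.map L = _ := volume.map_linearMap_addHaar_eq_smul_addHaar hdet
  calc ∫ z, f z * ellipsoidalKernel L x F z
      = |(LinearMap.det (L : E →ₗ[ℝ] E))⁻¹| * ∫ z, f (x + z) * F (‖L.symm z‖ ^ 2) := by
        rw [← integral_add_left_eq_self _ x, ← integral_const_mul, abs_inv]
        congr! 2
        rw [ellipsoidalKernel, add_sub_cancel_left]
        ring
    _ = ∫ z, f (x + z) * F (‖L.symm z‖ ^ 2) ∂(volume.map L) := by
        rw [hmap, integral_smul_measure, ENNReal.toReal_ofReal (abs_nonneg _), smul_eq_mul]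
    _ = ∫ y, f (x + L y) * F (‖y‖ ^ 2) := by
        have hL : MeasurableEmbedding L := L.toHomeomorph.measurableEmbedding
        simp [hL.integral_map]

variable {ι : Type*} {l : Filter ι} {R : ℝ} {k : ι → ℝ → ℝ}

lemma ae_tendsto_integral_ellipsoidalKernel (L : E ≃L[ℝ] E) (μ : Measure E)
    [IsLocallyFiniteMeasure μ] (hR : 0 ≤ R) (hk : IsRadialPeak l R k)
    (hone : Tendsto (fun i => ∫ y : E, k i (‖y‖ ^ 2)) l (𝓝 1)) :
    ∀ᵐ x : E, Tendsto (fun i => ∫ z, ellipsoidalKernel L x (k i) z ∂μ) l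
      (𝓝 (μ.rnDeriv volume x).toReal) := by
  filter_upwards [ae_tendsto_rnDeriv_preimage_closedBall L.symm.toHomeomorph μ volume,
    μ.rnDeriv_lt_top volume] with x hx hfin
  have hcpt := isCompact_setOf_norm_symm_sub_sq_le L x hR
  refine tendsto_integral_comp_of_tendsto_sublevel_ratio (by fun_prop) (fun z => sq_nonneg _)
    hcpt.measure_ne_top (ν := volume) hcpt.measure_ne_top (fun r hr => ?_) ?_
    (hk.const_mul (inv_nonneg.2 (abs_nonneg (LinearMap.det (L : E →ₗ[ℝ] E))))) ?_
  · refine (Measure.measure_pos_of_mem_nhds (x := x) volume ?_).ne'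
    refine (by fun_prop : Continuous fun z => ‖L.symm (z - x)‖ ^ 2).continuousAt
      (Iic_mem_nhds ?_)
    simpa using hr
  · have hsqrt : Tendsto Real.sqrt (𝓝[>] 0) (𝓝[>] 0) :=
      tendsto_nhdsWithin_of_tendsto_nhds_of_eventually_within _
        (by simpa using Real.continuous_sqrt.continuousWithinAt.tendsto (x := 0))
        (eventually_mem_nhdsWithin.mono fun r hr => Real.sqrt_pos.2 hr)
    refine (((ENNReal.tendsto_toReal hfin.ne).comp hx).comp hsqrt).congr' ?_
    filter_upwards [self_mem_nhdsWithin] with r (hr : 0 < r)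
    rw [setOf_norm_symm_sub_sq_le L x hr.le]
    exact ENNReal.toReal_div _ _
  · refine hone.congr fun i => ?_
    simpa [ellipsoidalKernel] using (integral_mul_ellipsoidalKernel L x (k i) fun _ => 1).symm

lemma isLocallyFiniteMeasure_withDensity_ofReal {X : Type*} [TopologicalSpace X]
    [MeasurableSpace X] [BorelSpace X] {μ : Measure X} {f : X → ℝ} (hf : LocallyIntegrable f μ) :
    IsLocallyFiniteMeasure (μ.withDensity fun x => ENNReal.ofReal (f x)) where
  finiteAtNhds x := by
    obtain ⟨s, hs, hfs⟩ := hf x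
    obtain ⟨t, hts, ht, hxt⟩ := mem_nhds_iff.1 hs
    refine ⟨t, ht.mem_nhds hxt, ?_⟩
    rw [withDensity_apply _ ht.measurableSet]
    exact (hfs.mono_set hts).lintegral_lt_top

lemma ae_tendsto_integral_mul_ellipsoidalKernel_of_nonneg (L : E ≃L[ℝ] E) {f : E → ℝ}
    (hf : LocallyIntegrable f) (hf0 : 0 ≤ f) (hR : 0 ≤ R) (hk : IsRadialPeak l R k)
    (hone : Tendsto (fun i => ∫ y : E, k i (‖y‖ ^ 2)) l (𝓝 1)) :
    ∀ᵐ x : E, Tendsto (fun i => ∫ z, f z * ellipsoidalKernel L x (k i) z) l (𝓝 (f x)) := by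
  have hmeas : AEMeasurable fun x => ENNReal.ofReal (f x) :=
    hf.aestronglyMeasurable.aemeasurable.ennreal_ofReal
  have := isLocallyFiniteMeasure_withDensity_ofReal hf
  filter_upwards [ae_tendsto_integral_ellipsoidalKernel L
    (volume.withDensity fun x => ENNReal.ofReal (f x)) hR hk hone,
    Measure.rnDeriv_withDensity₀ volume hmeas] with x hx hderiv
  rw [hderiv, ENNReal.toReal_ofReal (hf0 x)] at hx
  refine hx.congr fun i => ?_
  rw [integral_withDensity_eq_integral_toReal_smul₀ hmeas
    (.of_forall fun _ => ENNReal.ofReal_lt_top)]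
  simp only [ENNReal.toReal_ofReal (hf0 _), smul_eq_mul]

lemma integrable_mul_ellipsoidalKernel (L : E ≃L[ℝ] E) (x : E) {f : E → ℝ}
    (hf : LocallyIntegrable f) {F : ℝ → ℝ} (hF : Continuous F) (hR : 0 ≤ R)
    (hFR : ∀ u, R ≤ u → F u = 0) : Integrable fun z => f z * ellipsoidalKernel L x F z :=
  hf.integrable_smul_right_of_hasCompactSupport (continuous_ellipsoidalKernel L x hF)
    (hasCompactSupport_ellipsoidalKernel L x hR hFR)

lemma locallyIntegrable_posPart {X : Type*} [TopologicalSpace X] [MeasurableSpace X]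
    {μ : Measure X} {f : X → ℝ} (hf : LocallyIntegrable f μ) : LocallyIntegrable f⁺ μ := fun x =>
  have ⟨s, hs, hfs⟩ := hf x
  ⟨s, hs, hfs.pos_part⟩

lemma ae_tendsto_integral_mul_ellipsoidalKernel (L : E ≃L[ℝ] E) {f : E → ℝ}
    (hf : LocallyIntegrable f) (hR : 0 ≤ R) (hk : IsRadialPeak l R k)
    (hone : Tendsto (fun i => ∫ y : E, k i (‖y‖ ^ 2)) l (𝓝 1)) :
    ∀ᵐ x : E, Tendsto (fun i => ∫ z, f z * ellipsoidalKernel L x (k i) z) l (𝓝 (f x)) := by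
  have hpos : LocallyIntegrable f⁺ := locallyIntegrable_posPart hf
  have hneg : LocallyIntegrable f⁻ := posPart_neg f ▸ locallyIntegrable_posPart hf.neg
  filter_upwards [ae_tendsto_integral_mul_ellipsoidalKernel_of_nonneg L hpos
    (posPart_nonneg f) hR hk hone, ae_tendsto_integral_mul_ellipsoidalKernel_of_nonneg L hneg
    (negPart_nonneg f) hR hk hone] with x hx hx'
  have hsub : ∀ z, f⁺ z - f⁻ z = f z := congrFun (posPart_sub_negPart f)
  rw [← hsub]
  refine (hx.sub hx').congr fun i => ?_
  rw [← integral_sub (integrable_mul_ellipsoidalKernel L x hpos (hk.contDiff i).continuous hR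
    (hk.eq_zero_of_le i)) (integrable_mul_ellipsoidalKernel L x hneg (hk.contDiff i).continuous hR
    (hk.eq_zero_of_le i))]
  simp only [← sub_mul, hsub]

end EllipsoidalKernel

/-- The Laplacian of `y ↦ F (‖y‖ ^ 2)` on `ℝ^n`, as a function of `u = ‖y‖ ^ 2`. -/
noncomputable def radialLaplacian (n : ℕ) (F : ℝ → ℝ) (u : ℝ) : ℝ :=
  4 * u * deriv (deriv F) u + 2 * n * deriv F u

lemma radialLaplacian_mul (n : ℕ) {F G : ℝ → ℝ} (hF : ContDiff ℝ 2 F) (hG : ContDiff ℝ 2 G)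
    (u : ℝ) :
    radialLaplacian n (fun v => F v * G v) u =
      F u * radialLaplacian n G u + G u * radialLaplacian n F u +
        8 * u * (deriv F u * deriv G u) := by
  have hF1 := hF.differentiable two_ne_zero
  have hG1 := hG.differentiable two_ne_zero
  have hF2 := hF.differentiable_deriv_two
  have hG2 := hG.differentiable_deriv_two
  have hderiv : deriv (fun v => F v * G v) = fun v => deriv F v * G v + F v * deriv G v :=
    funext fun v => deriv_fun_mul (hF1 v) (hG1 v)
  have hderiv2 : deriv (deriv fun v => F v * G v) u = deriv (deriv F) u * G u +
      deriv F u * deriv G u + (deriv F u * deriv G u + F u * deriv (deriv G) u) := by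
    rw [hderiv, deriv_fun_add ((hF2 u).fun_mul (hG1 u)) ((hF1 u).fun_mul (hG2 u)),
      deriv_fun_mul (hF2 u) (hG1 u), deriv_fun_mul (hF1 u) (hG2 u)]
  rw [radialLaplacian, hderiv2, hderiv, radialLaplacian, radialLaplacian]
  ring

lemma radialLaplacian_const_mul (n : ℕ) (c : ℝ) (F : ℝ → ℝ) :
    radialLaplacian n (fun v => c * F v) = fun u => c * radialLaplacian n F u := by
  funext u
  simp only [radialLaplacian, deriv_const_mul_field']
  ring

lemma continuous_radialLaplacian (n : ℕ) {F : ℝ → ℝ} (hF : ContDiff ℝ 2 F) :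
    Continuous (radialLaplacian n F) := by
  have : Continuous (deriv F) := hF.continuous_deriv one_le_two
  have : Continuous (deriv (deriv F)) := (hF.iterate_deriv' 0 2).continuous
  unfold radialLaplacian
  fun_prop

section GaussianProfile

/-- The heat kernel of `ℝ^n` at time `s`, as a function of `u = ‖y‖ ^ 2`. -/
noncomputable def gaussianProfile (n : ℕ) (s u : ℝ) : ℝ :=
  (2 * Real.pi * s) ^ (-(n : ℝ) / 2) * Real.exp (-u / (2 * s))

variable {n : ℕ}

lemma gaussianProfile_pos {s : ℝ} (hs : 0 < s) (u : ℝ) : 0 < gaussianProfile n s u := by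
  unfold gaussianProfile
  positivity

lemma antitone_gaussianProfile {s : ℝ} (hs : 0 < s) : Antitone (gaussianProfile n s) := by
  intro u v huv
  unfold gaussianProfile
  gcongr

lemma contDiff_gaussianProfile {m : WithTop ℕ∞} (s : ℝ) : ContDiff ℝ m (gaussianProfile n s) := by
  unfold gaussianProfile
  fun_prop

lemma deriv_gaussianProfile (s : ℝ) :
    deriv (gaussianProfile n s) = fun u => -(1 / (2 * s)) * gaussianProfile n s u := by
  funext u
  have hexp : HasDerivAt (fun u : ℝ => -u / (2 * s)) (-1 / (2 * s)) u :=
    (hasDerivAt_id u).neg.div_const _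
  have hprofile : HasDerivAt (gaussianProfile n s) _ u := hexp.exp.const_mul _
  rw [hprofile.deriv, gaussianProfile]
  ring

lemma radialLaplacian_gaussianProfile (s u : ℝ) :
    radialLaplacian n (gaussianProfile n s) u =
      gaussianProfile n s u * (u / s ^ 2 - n / s) := by
  rw [radialLaplacian, deriv_gaussianProfile, deriv_const_mul _
    ((contDiff_gaussianProfile (m := 1) s).differentiable one_ne_zero u), deriv_gaussianProfile]
  rcases eq_or_ne s 0 with rfl | hs
  · simp
  · field_simp
    ring

lemma hasDerivAt_gaussianProfile {s : ℝ} (hs : 0 < s) (u : ℝ) :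
    HasDerivAt (fun s => gaussianProfile n s u)
      (1 / 2 * radialLaplacian n (gaussianProfile n s) u) s := by
  have hfactor : HasDerivAt (fun s : ℝ => 2 * Real.pi * s) (2 * Real.pi) s := by
    simpa using (hasDerivAt_id s).const_mul (2 * Real.pi)
  have hpow := hfactor.rpow_const (p := -(n : ℝ) / 2) (.inl (by positivity))
  have hexp : HasDerivAt (fun s : ℝ => -u / (2 * s)) (u / (2 * s ^ 2)) s := by
    refine ((hasDerivAt_const s (-u)).div ((hasDerivAt_id s).const_mul 2)
      (mul_ne_zero two_ne_zero hs.ne')).congr_deriv ?_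
    simp only [id]
    field_simp
    ring
  refine (hpow.mul hexp.exp).congr_deriv ?_
  rw [radialLaplacian_gaussianProfile, gaussianProfile,
    Real.rpow_sub_one (by positivity : 2 * Real.pi * s ≠ 0)]
  field_simp
  ring

lemma gaussianProfile_mul_le_mul {s t u v : ℝ} (hs : 0 < s) (hst : s ≤ t) (huv : u ≤ v) :
    gaussianProfile n s v * gaussianProfile n t u ≤
      gaussianProfile n s u * gaussianProfile n t v := by
  have ht : 0 < t := hs.trans_le hst
  have hexp : -v / (2 * s) + -u / (2 * t) ≤ -u / (2 * s) + -v / (2 * t) := by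
    have : (v - u) / (2 * t) ≤ (v - u) / (2 * s) := by
      gcongr
    linear_combination this
  unfold gaussianProfile
  rw [mul_mul_mul_comm, ← Real.exp_add, mul_mul_mul_comm, ← Real.exp_add]
  gcongr

lemma tendsto_inv_pow_mul_gaussianProfile (m : ℕ) {δ : ℝ} (hδ : 0 < δ) :
    Tendsto (fun s => s⁻¹ ^ m * gaussianProfile n s δ) (𝓝[>] 0) (𝓝 0) := by
  have hdecay := ((tendsto_rpow_mul_exp_neg_mul_atTop_nhds_zero (m + (n : ℝ) / 2) (δ / 2)
    (half_pos hδ)).comp tendsto_inv_nhdsGT_zero).const_mul ((2 * Real.pi) ^ (-(n : ℝ) / 2))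
  rw [mul_zero] at hdecay
  refine hdecay.congr' ?_
  filter_upwards [self_mem_nhdsWithin] with s (hs : 0 < s)
  have hpow : s⁻¹ ^ (m + (n : ℝ) / 2) = s⁻¹ ^ m * s ^ (-(n : ℝ) / 2) := by
    rw [Real.rpow_add (by positivity), Real.rpow_natCast, Real.inv_rpow hs.le,
      ← Real.rpow_neg hs.le, neg_div]
  simp only [Function.comp_apply, gaussianProfile]
  rw [hpow, Real.mul_rpow (by positivity) hs.le,
    show -(δ / 2) * s⁻¹ = -δ / (2 * s) by field_simp]
  ring

open Module in
lemma integral_gaussianProfile {E : Type*} [NormedAddCommGroup E] [InnerProductSpace ℝ E]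
    [FiniteDimensional ℝ E] [MeasurableSpace E] [BorelSpace E] {s : ℝ} (hs : 0 < s) :
    ∫ y : E, gaussianProfile (finrank ℝ E) s (‖y‖ ^ 2) = 1 := by
  have hexp : ∀ y : E, Real.exp (-‖y‖ ^ 2 / (2 * s)) = Real.exp (-(1 / (2 * s)) * ‖y‖ ^ 2) :=
    fun y => by ring_nf
  simp only [gaussianProfile, hexp]
  rw [integral_const_mul, GaussianFourier.integral_rexp_neg_mul_sq_norm (by positivity),
    show Real.pi / (1 / (2 * s)) = 2 * Real.pi * s by field_simp,
    ← Real.rpow_add (by positivity), neg_div, neg_add_cancel, Real.rpow_zero]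

end GaussianProfile

section RadialCutoff

/-- A smooth decreasing cutoff, equal to `1` on `(-∞, 1]` and to `0` on `[2, ∞)`. -/
noncomputable def radialCutoff (u : ℝ) : ℝ := Real.smoothTransition (2 - u)

lemma contDiff_radialCutoff {m : ℕ∞} : ContDiff ℝ m radialCutoff :=
  Real.smoothTransition.contDiff.comp (contDiff_const.sub contDiff_id)

lemma antitone_radialCutoff : Antitone radialCutoff := fun _ _ h =>
  Real.smoothTransition.monotone (sub_le_sub_left h 2)

lemma radialCutoff_nonneg (u : ℝ) : 0 ≤ radialCutoff u := Real.smoothTransition.nonneg _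

lemma radialCutoff_le_one (u : ℝ) : radialCutoff u ≤ 1 := Real.smoothTransition.le_one _

lemma radialCutoff_of_le_one {u : ℝ} (hu : u ≤ 1) : radialCutoff u = 1 :=
  Real.smoothTransition.one_of_one_le (by linarith)

lemma radialCutoff_of_two_le {u : ℝ} (hu : 2 ≤ u) : radialCutoff u = 0 :=
  Real.smoothTransition.zero_of_nonpos (by linarith)

lemma tsupport_deriv_radialCutoff_subset : tsupport (deriv radialCutoff) ⊆ Set.Icc 1 2 := by
  refine closure_minimal (fun u hu => ?_) isClosed_Icc
  by_contra h
  rw [Set.mem_Icc, not_and_or, not_le, not_le] at h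
  refine hu ?_
  rcases h with h | h
  · have : radialCutoff =ᶠ[𝓝 u] fun _ => 1 := by
      filter_upwards [Iio_mem_nhds h] with v hv using radialCutoff_of_le_one hv.le
    rw [this.deriv_eq, deriv_const]
  · have : radialCutoff =ᶠ[𝓝 u] fun _ => 0 := by
      filter_upwards [Ioi_mem_nhds h] with v hv using radialCutoff_of_two_le hv.le
    rw [this.deriv_eq, deriv_const]

end RadialCutoff

lemma tendstoUniformlyOn_zero_of_norm_le {ι α β : Type*} [SeminormedAddCommGroup β]
    {l : Filter ι} {F : ι → α → β} {b : ι → ℝ} {s : Set α}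
    (hF : ∀ᶠ i in l, ∀ x ∈ s, ‖F i x‖ ≤ b i) (hb : Tendsto b l (𝓝 0)) :
    TendstoUniformlyOn F 0 l s := by
  rw [Metric.tendstoUniformlyOn_iff]
  intro ε hε
  filter_upwards [hF, hb.eventually_lt_const hε] with i hi hlt x hx
  rw [Pi.zero_apply, dist_zero_left]
  exact (hi x hx).trans_lt hlt

section TruncatedProfile

variable {n : ℕ}

/-- The heat kernel of `ℝ^n` at time `s`, cut off smoothly outside the unit ball, as a function of
`u = ‖y‖ ^ 2`. -/
noncomputable def truncatedProfile (n : ℕ) (s u : ℝ) : ℝ := radialCutoff u * gaussianProfile n s u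

lemma contDiff_truncatedProfile {m : ℕ∞} (s : ℝ) : ContDiff ℝ m (truncatedProfile n s) :=
  contDiff_radialCutoff.mul (contDiff_gaussianProfile s)

lemma antitone_truncatedProfile {s : ℝ} (hs : 0 < s) : Antitone (truncatedProfile n s) :=
  fun u v h => mul_le_mul (antitone_radialCutoff h) (antitone_gaussianProfile hs h)
    (gaussianProfile_pos hs v).le (radialCutoff_nonneg u)

lemma truncatedProfile_of_two_le (s : ℝ) {u : ℝ} (hu : 2 ≤ u) : truncatedProfile n s u = 0 := by
  rw [truncatedProfile, radialCutoff_of_two_le hu, zero_mul]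

lemma deriv_truncatedProfile (s u : ℝ) :
    deriv (truncatedProfile n s) u =
      (deriv radialCutoff u - radialCutoff u * (2 * s)⁻¹) * gaussianProfile n s u := by
  have hmul : deriv (truncatedProfile n s) u = _ := deriv_fun_mul
    ((contDiff_radialCutoff (m := 1)).differentiable one_ne_zero u)
    ((contDiff_gaussianProfile (m := 1) s).differentiable one_ne_zero u)
  rw [hmul, deriv_gaussianProfile]
  ring

lemma exists_abs_deriv_radialCutoff_le : ∃ M, ∀ u, |deriv radialCutoff u| ≤ M :=
  ((contDiff_radialCutoff (m := 1)).continuous_deriv le_rfl).bounded_above_of_compact_support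
    (isCompact_Icc.of_isClosed_subset isClosed_closure tsupport_deriv_radialCutoff_subset)

lemma tendsto_add_mul_inv_mul_gaussianProfile (a b : ℝ) {δ : ℝ} (hδ : 0 < δ) :
    Tendsto (fun s => (a + b * s⁻¹) * gaussianProfile n s δ) (𝓝[>] 0) (𝓝 0) := by
  have h := ((tendsto_inv_pow_mul_gaussianProfile (n := n) 0 hδ).const_mul a).add
    ((tendsto_inv_pow_mul_gaussianProfile (n := n) 1 hδ).const_mul b)
  simp only [mul_zero, add_zero] at h
  refine h.congr fun s => ?_
  ring

lemma isRadialPeak_truncatedProfile (n : ℕ) : IsRadialPeak (𝓝[>] 0) 2 (truncatedProfile n) where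
  contDiff s := contDiff_truncatedProfile s
  eq_zero_of_le s _ hu := truncatedProfile_of_two_le s hu
  eventually_antitone := eventually_mem_nhdsWithin.mono fun _ hs => antitone_truncatedProfile hs
  tendstoUniformlyOn_deriv δ hδ := by
    obtain ⟨M, hM⟩ := exists_abs_deriv_radialCutoff_le
    refine tendstoUniformlyOn_zero_of_norm_le ?_
      (tendsto_add_mul_inv_mul_gaussianProfile (n := n) M (1 / 2) hδ)
    filter_upwards [self_mem_nhdsWithin] with s (hs : 0 < s) u (hu : δ ≤ u)
    have hχ : |radialCutoff u * (2 * s)⁻¹| ≤ 1 / 2 * s⁻¹ := by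
      rw [abs_of_nonneg (mul_nonneg (radialCutoff_nonneg u) (by positivity)), mul_inv,
        ← one_div (2 : ℝ)]
      exact mul_le_of_le_one_left (by positivity) (radialCutoff_le_one u)
    rw [deriv_truncatedProfile, norm_mul, Real.norm_of_nonneg (gaussianProfile_pos hs u).le]
    exact mul_le_mul ((abs_sub _ _).trans (add_le_add (hM u) hχ)) (antitone_gaussianProfile hs hu)
      (gaussianProfile_pos hs u).le (add_nonneg ((abs_nonneg _).trans (hM u)) (by positivity))

/-- The failure of the radial Laplacian to commute with the cutoff of the heat kernel. -/
noncomputable def cutoffCommutator (n : ℕ) (s u : ℝ) : ℝ :=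
  radialLaplacian n (truncatedProfile n s) u -
    radialCutoff u * radialLaplacian n (gaussianProfile n s) u

lemma cutoffCommutator_eq (s u : ℝ) :
    cutoffCommutator n s u = (radialLaplacian n radialCutoff u -
      4 * u * deriv radialCutoff u * s⁻¹) * gaussianProfile n s u := by
  have hmul : radialLaplacian n (truncatedProfile n s) u = _ :=
    radialLaplacian_mul n contDiff_radialCutoff (contDiff_gaussianProfile s) u
  rw [cutoffCommutator, hmul, deriv_gaussianProfile]
  ring

lemma cutoffCommutator_of_notMem (s : ℝ) {u : ℝ} (hu : u ∉ Set.Icc 1 2) :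
    cutoffCommutator n s u = 0 := by
  have hsupp : u ∉ tsupport (deriv radialCutoff) := fun h =>
    hu (tsupport_deriv_radialCutoff_subset h)
  have hderiv : deriv radialCutoff u = 0 := image_eq_zero_of_notMem_tsupport hsupp
  have hderiv2 : deriv (deriv radialCutoff) u = 0 :=
    Function.notMem_support.1 fun h => hsupp (support_deriv_subset h)
  rw [cutoffCommutator_eq, radialLaplacian, hderiv, hderiv2]
  ring

lemma tendstoUniformly_cutoffCommutator (n : ℕ) :
    TendstoUniformly (cutoffCommutator n) 0 (𝓝[>] 0) := by
  obtain ⟨M, hM⟩ := (isCompact_Icc (a := (1 : ℝ)) (b := 2)).exists_bound_of_continuousOn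
    (continuous_radialLaplacian n contDiff_radialCutoff).continuousOn
  have hcont : Continuous fun u => 4 * u * deriv radialCutoff u :=
    (continuous_const.mul continuous_id).mul
      ((contDiff_radialCutoff (m := 1)).continuous_deriv le_rfl)
  obtain ⟨M', hM'⟩ := (isCompact_Icc (a := (1 : ℝ)) (b := 2)).exists_bound_of_continuousOn
    hcont.continuousOn
  rw [← tendstoUniformlyOn_univ]
  refine tendstoUniformlyOn_zero_of_norm_le ?_
    (tendsto_add_mul_inv_mul_gaussianProfile (n := n) M M' one_pos)
  have hM0 : 0 ≤ M := (norm_nonneg _).trans (hM 1 (by norm_num))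
  have hM0' : 0 ≤ M' := (norm_nonneg _).trans (hM' 1 (by norm_num))
  filter_upwards [self_mem_nhdsWithin] with s (hs : 0 < s) u _
  by_cases hu : u ∈ Set.Icc 1 2
  · rw [cutoffCommutator_eq, norm_mul, Real.norm_of_nonneg (gaussianProfile_pos hs u).le]
    refine mul_le_mul ((norm_sub_le _ _).trans (add_le_add (hM u hu) ?_))
      (antitone_gaussianProfile hs hu.1) (gaussianProfile_pos hs u).le (by positivity)
    rw [norm_mul, Real.norm_of_nonneg (inv_nonneg.2 hs.le)]
    gcongr
    exact hM' u hu
  · rw [cutoffCommutator_of_notMem s hu, norm_zero]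
    exact mul_nonneg (by positivity) (gaussianProfile_pos hs 1).le

/-- The part of the heat kernel of `ℝ^n` removed by the cutoff, as a function of `u = ‖y‖ ^ 2`. -/
noncomputable def gaussianTail (n : ℕ) (s u : ℝ) : ℝ := (1 - radialCutoff u) * gaussianProfile n s u

lemma truncatedProfile_add_gaussianTail (s u : ℝ) :
    truncatedProfile n s u + gaussianTail n s u = gaussianProfile n s u := by
  rw [truncatedProfile, gaussianTail]
  ring

lemma continuous_gaussianTail (s : ℝ) : Continuous (gaussianTail n s) :=
  (continuous_const.sub (contDiff_radialCutoff (m := 0)).continuous).mul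
    (contDiff_gaussianProfile (m := 0) s).continuous

lemma abs_gaussianTail_le {s t : ℝ} (hs : 0 < s) (hst : s ≤ t) (u : ℝ) :
    |gaussianTail n s u| ≤
      gaussianProfile n s 1 / gaussianProfile n t 1 * gaussianProfile n t u := by
  have hs1 := gaussianProfile_pos (n := n) hs
  have ht1 := gaussianProfile_pos (n := n) (hs.trans_le hst)
  rw [gaussianTail, abs_mul, abs_of_pos (hs1 u), div_mul_eq_mul_div, le_div_iff₀ (ht1 1)]
  rcases le_total u 1 with hu | hu
  · rw [radialCutoff_of_le_one hu, sub_self, abs_zero, zero_mul, zero_mul]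
    exact (mul_pos (hs1 1) (ht1 u)).le
  · have hχ : |1 - radialCutoff u| ≤ 1 := by
      rw [abs_of_nonneg (sub_nonneg.2 (radialCutoff_le_one u))]
      linarith [radialCutoff_nonneg u]
    rw [mul_assoc]
    exact (mul_le_of_le_one_left (mul_pos (hs1 u) (ht1 1)).le hχ).trans
      (gaussianProfile_mul_le_mul hs hst hu)

end TruncatedProfile

section KernelIntegrals

open Module

variable {E : Type*} [NormedAddCommGroup E] [InnerProductSpace ℝ E] {n : ℕ} {f : E → ℝ}

lemma norm_mul_ellipsoidalKernel_le_indicator (L : E ≃L[ℝ] E) (x : E) {F : ℝ → ℝ} {R C : ℝ}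
    (hF : ∀ u, 0 ≤ u → |F u| ≤ C) (hFR : ∀ u, R ≤ u → F u = 0) (z : E) :
    ‖f z * ellipsoidalKernel L x F z‖ ≤ {z | ‖L.symm (z - x)‖ ^ 2 ≤ R}.indicator
      (fun z => |LinearMap.det (L : E →ₗ[ℝ] E)|⁻¹ * C * ‖f z‖) z := by
  simp only [ellipsoidalKernel, Set.indicator_apply, Set.mem_ofPred_eq]
  split_ifs with hz
  · rw [norm_mul, norm_mul, norm_inv, Real.norm_eq_abs |_|, abs_abs, mul_comm]
    gcongr
    exact hF _ (sq_nonneg _)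
  · rw [hFR _ (not_le.1 hz).le, mul_zero, mul_zero, norm_zero]

lemma norm_mul_ellipsoidalKernel_gaussianTail_le (L : E ≃L[ℝ] E) (x : E) {s t : ℝ} (hs : 0 < s)
    (hst : s ≤ t) (z : E) :
    ‖f z * ellipsoidalKernel L x (gaussianTail n s) z‖ ≤
      gaussianProfile n s 1 / gaussianProfile n t 1 *
        ‖f z * ellipsoidalKernel L x (gaussianProfile n t) z‖ := by
  have hle := abs_gaussianTail_le (n := n) hs hst (‖L.symm (z - x)‖ ^ 2)
  have hpos := (gaussianProfile_pos (n := n) (hs.trans_le hst) (‖L.symm (z - x)‖ ^ 2)).le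
  simp only [ellipsoidalKernel, norm_mul, Real.norm_eq_abs, abs_of_nonneg hpos]
  calc _ ≤ |f z| * (|(|LinearMap.det (L : E →ₗ[ℝ] E)|⁻¹)| *
        (gaussianProfile n s 1 / gaussianProfile n t 1 *
          gaussianProfile n t (‖L.symm (z - x)‖ ^ 2))) := by gcongr
    _ = _ := by ring

variable [FiniteDimensional ℝ E] [MeasurableSpace E] [BorelSpace E]

lemma integrable_indicator_const_mul_norm (hf : LocallyIntegrable f) (L : E ≃L[ℝ] E) (x : E)
    {R : ℝ} (hR : 0 ≤ R) (C : ℝ) :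
    Integrable ({z | ‖L.symm (z - x)‖ ^ 2 ≤ R}.indicator fun z => C * ‖f z‖) := by
  have hcpt := isCompact_setOf_norm_symm_sub_sq_le L x hR
  exact IntegrableOn.integrable_indicator ((hf.integrableOn_isCompact hcpt).norm.const_mul C)
    hcpt.measurableSet

lemma tendsto_integral_mul_ellipsoidalKernel_of_tendstoUniformly {ι : Type*} {l : Filter ι}
    [l.IsCountablyGenerated] (L : E ≃L[ℝ] E) (x : E) (hf : LocallyIntegrable f)
    {F : ι → ℝ → ℝ} (hF : TendstoUniformly F 0 l) (hFc : ∀ i, Continuous (F i)) {R : ℝ}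
    (hR : 0 ≤ R) (hFR : ∀ i u, R ≤ u → F i u = 0) :
    Tendsto (fun i => ∫ z, f z * ellipsoidalKernel L x (F i) z) l (𝓝 0) := by
  rw [← integral_zero E ℝ]
  refine tendsto_integral_filter_of_dominated_convergence _
    (.of_forall fun i => (integrable_mul_ellipsoidalKernel L x hf (hFc i) hR (hFR i)).1) ?_
    (integrable_indicator_const_mul_norm hf L x hR
      (|LinearMap.det (L : E →ₗ[ℝ] E)|⁻¹ * 1)) (.of_forall fun z => ?_)
  · filter_upwards [Metric.tendstoUniformly_iff.1 hF 1 one_pos] with i hi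
    refine .of_forall (norm_mul_ellipsoidalKernel_le_indicator L x (fun u _ => ?_) (hFR i))
    simpa using (hi u).le
  · have h := ((hF.tendsto_at (‖L.symm (z - x)‖ ^ 2)).const_mul
      |LinearMap.det (L : E →ₗ[ℝ] E)|⁻¹).const_mul (f z)
    simpa only [ellipsoidalKernel, Pi.zero_apply, mul_zero] using h

lemma integrable_mul_ellipsoidalKernel_gaussianTail (L : E ≃L[ℝ] E) (x : E)
    (hf : LocallyIntegrable f) {s t : ℝ} (hs : 0 < s) (hst : s ≤ t)
    (hft : Integrable fun z => f z * ellipsoidalKernel L x (gaussianProfile n t) z) :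
    Integrable fun z => f z * ellipsoidalKernel L x (gaussianTail n s) z :=
  (hft.norm.const_mul _).mono' (hf.aestronglyMeasurable.mul
    (continuous_ellipsoidalKernel L x (continuous_gaussianTail s)).aestronglyMeasurable)
    (.of_forall (norm_mul_ellipsoidalKernel_gaussianTail_le L x hs hst))

lemma integral_mul_ellipsoidalKernel_gaussianProfile (L : E ≃L[ℝ] E) (x : E)
    (hf : LocallyIntegrable f) {s t : ℝ} (hs : 0 < s) (hst : s ≤ t)
    (hft : Integrable fun z => f z * ellipsoidalKernel L x (gaussianProfile n t) z) :
    ∫ z, f z * ellipsoidalKernel L x (gaussianProfile n s) z =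
      (∫ z, f z * ellipsoidalKernel L x (truncatedProfile n s) z) +
        ∫ z, f z * ellipsoidalKernel L x (gaussianTail n s) z := by
  rw [← integral_add (integrable_mul_ellipsoidalKernel L x hf
    (contDiff_truncatedProfile (m := 0) s).continuous zero_le_two
    fun _ => truncatedProfile_of_two_le s)
    (integrable_mul_ellipsoidalKernel_gaussianTail L x hf hs hst hft)]
  congr! 2 with z
  rw [ellipsoidalKernel, ← truncatedProfile_add_gaussianTail, ellipsoidalKernel, ellipsoidalKernel]
  ring

lemma tendsto_inv_mul_integral_gaussianTail (L : E ≃L[ℝ] E) (x : E) {t : ℝ} (ht : 0 < t)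
    (hft : Integrable fun z => f z * ellipsoidalKernel L x (gaussianProfile n t) z) :
    Tendsto (fun s => s⁻¹ * ∫ z, f z * ellipsoidalKernel L x (gaussianTail n s) z)
      (𝓝[>] 0) (𝓝 0) := by
  have hdecay := (tendsto_inv_pow_mul_gaussianProfile (n := n) 1 one_pos).mul_const
    ((gaussianProfile n t 1)⁻¹ *
      ∫ z, ‖f z * ellipsoidalKernel L x (gaussianProfile n t) z‖)
  rw [zero_mul] at hdecay
  refine squeeze_zero_norm' ?_ hdecay
  filter_upwards [Ioc_mem_nhdsGT ht] with s ⟨hs, hst⟩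
  have hle := norm_integral_le_of_norm_le (hft.norm.const_mul _)
    (.of_forall (norm_mul_ellipsoidalKernel_gaussianTail_le L x hs hst))
  rw [integral_const_mul] at hle
  rw [norm_mul, norm_inv, Real.norm_of_nonneg hs.le]
  calc _ ≤ s⁻¹ * (gaussianProfile n s 1 / gaussianProfile n t 1 * _) := by gcongr
    _ = _ := by ring

lemma tendsto_integral_truncatedProfile :
    Tendsto (fun s => ∫ y : E, truncatedProfile (finrank ℝ E) s (‖y‖ ^ 2)) (𝓝[>] 0) (𝓝 1) := by
  have hker (F : ℝ → ℝ) : ∫ z : E, 1 * ellipsoidalKernel (.refl ℝ E) 0 F z =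
      ∫ y : E, F (‖y‖ ^ 2) := by
    simpa using integral_mul_ellipsoidalKernel (.refl ℝ E) 0 F fun _ => 1
  have hint : Integrable fun z : E =>
      1 * ellipsoidalKernel (.refl ℝ E) 0 (gaussianProfile (finrank ℝ E) 1) z := by
    refine .of_integral_ne_zero ?_
    rw [hker, integral_gaussianProfile one_pos]
    exact one_ne_zero
  have hid : Tendsto (fun s : ℝ => s) (𝓝[>] 0) (𝓝 0) := nhdsWithin_le_nhds
  have htail := hid.mul (tendsto_inv_mul_integral_gaussianTail (.refl ℝ E) 0 one_pos hint)
  have hlim := htail.const_sub 1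
  rw [mul_zero, sub_zero] at hlim
  refine hlim.congr' ?_
  filter_upwards [Ioc_mem_nhdsGT one_pos] with s ⟨hs, hs1⟩
  have hsplit := integral_mul_ellipsoidalKernel_gaussianProfile (.refl ℝ E) 0
    (locallyIntegrable_const 1) hs hs1 hint
  rw [hker, integral_gaussianProfile hs, hker] at hsplit
  rw [mul_inv_cancel_left₀ hs.ne']
  exact sub_eq_iff_eq_add.2 hsplit

end KernelIntegrals

section TimeDerivative

variable {n : ℕ}

lemma continuous_radialCutoff_mul_radialLaplacian (n : ℕ) (s : ℝ) :
    Continuous fun u => radialCutoff u * radialLaplacian n (gaussianProfile n s) u :=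
  (contDiff_radialCutoff (m := 0)).continuous.mul
    (continuous_radialLaplacian n (contDiff_gaussianProfile s))

lemma continuous_cutoffCommutator (n : ℕ) (s : ℝ) : Continuous (cutoffCommutator n s) :=
  (continuous_radialLaplacian n (contDiff_truncatedProfile s)).sub
    (continuous_radialCutoff_mul_radialLaplacian n s)

lemma exists_abs_radialCutoff_mul_radialLaplacian_le (n : ℕ) {a : ℝ} (ha : 0 < a) (b : ℝ) :
    ∃ C, ∀ s ∈ Set.Icc a b, ∀ u, 0 ≤ u →
      |radialCutoff u * radialLaplacian n (gaussianProfile n s) u| ≤ C := by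
  have hcont : ContinuousOn (fun p : ℝ × ℝ => radialCutoff p.2 *
      radialLaplacian n (gaussianProfile n p.1) p.2) (Set.Icc a b ×ˢ Set.Icc 0 2) := by
    have hχ : Continuous radialCutoff := (contDiff_radialCutoff (m := 0)).continuous
    have hne : ∀ p ∈ Set.Icc a b ×ˢ Set.Icc (0 : ℝ) 2, p.1 ≠ 0 := fun p hp =>
      (ha.trans_le hp.1.1).ne'
    have hpow : ContinuousOn (fun p : ℝ × ℝ => (2 * Real.pi * p.1) ^ (-(n : ℝ) / 2))
        (Set.Icc a b ×ˢ Set.Icc 0 2) :=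
      ContinuousOn.rpow_const (by fun_prop) fun p hp => .inl (by simp [Real.pi_ne_zero, hne p hp])
    simp only [radialLaplacian_gaussianProfile, gaussianProfile]
    refine (hχ.comp continuous_snd).continuousOn.mul ?_
    fun_prop (disch := simpa using hne)
  obtain ⟨C, hC⟩ := (isCompact_Icc.prod isCompact_Icc).exists_bound_of_continuousOn hcont
  refine ⟨max C 0, fun s hs u hu => ?_⟩
  rcases le_total u 2 with hu2 | hu2
  · exact (hC (s, u) ⟨hs, hu, hu2⟩).trans (le_max_left _ _)
  · rw [radialCutoff_of_two_le hu2, zero_mul, abs_zero]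
    exact le_max_right _ _

variable {E : Type*} [NormedAddCommGroup E] [InnerProductSpace ℝ E] [FiniteDimensional ℝ E]
  [MeasurableSpace E] [BorelSpace E] {f : E → ℝ}

lemma hasDerivAt_integral_truncatedProfile (L : E ≃L[ℝ] E) (x : E) (hf : LocallyIntegrable f)
    {s : ℝ} (hs : 0 < s) :
    HasDerivAt (fun s => ∫ z, f z * ellipsoidalKernel L x (truncatedProfile n s) z)
      (1 / 2 * ∫ z, f z * ellipsoidalKernel L x
        (fun u => radialCutoff u * radialLaplacian n (gaussianProfile n s) u) z) s := by
  obtain ⟨C, hC⟩ := exists_abs_radialCutoff_mul_radialLaplacian_le n (half_pos hs) (2 * s)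
  have hT (r : ℝ) := integrable_mul_ellipsoidalKernel L x hf
    (contDiff_truncatedProfile (n := n) (m := 0) r).continuous zero_le_two
    fun _ => truncatedProfile_of_two_le r
  have hT' := integrable_mul_ellipsoidalKernel L x hf
    (continuous_radialCutoff_mul_radialLaplacian n s) zero_le_two
    fun _ hu => by rw [radialCutoff_of_two_le hu, zero_mul]
  rw [← integral_const_mul]
  refine (hasDerivAt_integral_of_dominated_loc_of_deriv_le
    (F' := fun r z => 1 / 2 * (f z * ellipsoidalKernel L x
      (fun u => radialCutoff u * radialLaplacian n (gaussianProfile n r) u) z))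
    (Icc_mem_nhds (half_lt_self hs) (lt_two_mul_self hs)) (.of_forall fun r => (hT r).1) (hT s)
    (hT'.const_mul _).1 (.of_forall fun z r hr => ?_)
    ((integrable_indicator_const_mul_norm hf L x zero_le_two
      (|LinearMap.det (L : E →ₗ[ℝ] E)|⁻¹ * C)).const_mul (1 / 2))
    (.of_forall fun z r hr => ?_)).2
  · rw [norm_mul, Real.norm_of_nonneg one_half_pos.le]
    gcongr
    exact norm_mul_ellipsoidalKernel_le_indicator L x (hC r hr)
      (fun u hu => by rw [radialCutoff_of_two_le hu, zero_mul]) z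
  · have hr0 : 0 < r := (half_pos hs).trans_le hr.1
    refine ((((hasDerivAt_gaussianProfile hr0 _).const_mul _).const_mul _).const_mul
      _).congr_deriv ?_
    simp only [ellipsoidalKernel]
    ring

lemma cutoffCommutator_of_three_le (s : ℝ) {u : ℝ} (hu : 3 ≤ u) : cutoffCommutator n s u = 0 :=
  cutoffCommutator_of_notMem s fun h => by linarith [h.2]

lemma integral_mul_ellipsoidalKernel_radialCutoff_mul_radialLaplacian (L : E ≃L[ℝ] E) (x : E)
    (hf : LocallyIntegrable f) (s : ℝ) :
    ∫ z, f z * ellipsoidalKernel L x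
        (fun u => radialCutoff u * radialLaplacian n (gaussianProfile n s) u) z =
      (∫ z, f z * ellipsoidalKernel L x (radialLaplacian n (truncatedProfile n s)) z) -
        ∫ z, f z * ellipsoidalKernel L x (cutoffCommutator n s) z := by
  rw [eq_sub_iff_add_eq, ← integral_add (integrable_mul_ellipsoidalKernel L x hf
    (continuous_radialCutoff_mul_radialLaplacian n s) zero_le_two
    fun u hu => by rw [radialCutoff_of_two_le hu, zero_mul])
    (integrable_mul_ellipsoidalKernel L x hf (continuous_cutoffCommutator n s) zero_le_three
      fun u => cutoffCommutator_of_three_le s)]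
  congr! 2 with z
  simp only [ellipsoidalKernel, cutoffCommutator]
  ring

/-- The commutator with the cutoff is negligible, so L'Hôpital's rule reduces the increment to
testing `f` against the Laplacian of a compactly supported function. -/
lemma tendsto_inv_mul_integral_truncatedProfile_sub (L : E ≃L[ℝ] E) (x : E)
    (hf : LocallyIntegrable f) {q : ℝ}
    (hfx : Tendsto (fun s => ∫ z, f z * ellipsoidalKernel L x (truncatedProfile n s) z)
      (𝓝[>] 0) (𝓝 (f x)))
    (hq : Tendsto (fun s => ∫ z, f z *
      ellipsoidalKernel L x (radialLaplacian n (truncatedProfile n s)) z) (𝓝[>] 0) (𝓝 q)) :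
    Tendsto (fun s => s⁻¹ *
      ((∫ z, f z * ellipsoidalKernel L x (truncatedProfile n s) z) - f x))
      (𝓝[>] 0) (𝓝 (1 / 2 * q)) := by
  have hcomm : Tendsto (fun s => ∫ z, f z * ellipsoidalKernel L x (cutoffCommutator n s) z)
      (𝓝[>] 0) (𝓝 0) :=
    tendsto_integral_mul_ellipsoidalKernel_of_tendstoUniformly L x hf
      (tendstoUniformly_cutoffCommutator n) (continuous_cutoffCommutator n) zero_le_three
      fun s _ => cutoffCommutator_of_three_le s
  have hderiv := (hq.sub hcomm).const_mul (1 / 2)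
  simp only [← integral_mul_ellipsoidalKernel_radialCutoff_mul_radialLaplacian L x hf,
    sub_zero] at hderiv
  refine (HasDerivAt.lhopital_zero_nhdsGT (g := id) (g' := 1)
    (eventually_mem_nhdsWithin.mono fun s hs =>
      (hasDerivAt_integral_truncatedProfile L x hf hs).sub_const (f x))
    (.of_forall hasDerivAt_id) (.of_forall fun _ => one_ne_zero)
    (by simpa using hfx.sub_const (f x)) nhdsWithin_le_nhds (by simpa using hderiv)).congr
    fun s => ?_
  rw [id, div_eq_inv_mul]

lemma tendsto_inv_mul_integral_gaussianProfile_sub (L : E ≃L[ℝ] E) (x : E)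
    (hf : LocallyIntegrable f) {t : ℝ} (ht : 0 < t)
    (hft : Integrable fun z => f z * ellipsoidalKernel L x (gaussianProfile n t) z) {q : ℝ}
    (hfx : Tendsto (fun s => ∫ z, f z * ellipsoidalKernel L x (truncatedProfile n s) z)
      (𝓝[>] 0) (𝓝 (f x)))
    (hq : Tendsto (fun s => ∫ z, f z *
      ellipsoidalKernel L x (radialLaplacian n (truncatedProfile n s)) z) (𝓝[>] 0) (𝓝 q)) :
    Tendsto (fun s => s⁻¹ *
      ((∫ z, f z * ellipsoidalKernel L x (gaussianProfile n s) z) - f x))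
      (𝓝[>] 0) (𝓝 (1 / 2 * q)) := by
  have hsum := (tendsto_inv_mul_integral_truncatedProfile_sub L x hf hfx hq).add
    (tendsto_inv_mul_integral_gaussianTail L x ht hft)
  rw [add_zero] at hsum
  refine hsum.congr' ?_
  filter_upwards [Ioc_mem_nhdsGT ht] with s ⟨hs, hst⟩
  rw [integral_mul_ellipsoidalKernel_gaussianProfile L x hf hs hst hft]
  ring

end TimeDerivative

section RadialDerivatives

variable {E G : Type*} [NormedAddCommGroup E] [NormedSpace ℝ E] [NormedAddCommGroup G]
  [InnerProductSpace ℝ G] (T : E →L[ℝ] G) (x z : E)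

lemma hasFDerivAt_comp_norm_sq {F : ℝ → ℝ} (hF : Differentiable ℝ F) :
    HasFDerivAt (fun z => F (‖T (z - x)‖ ^ 2))
      (deriv F (‖T (z - x)‖ ^ 2) • (2 : ℝ) • (innerSL ℝ (T (z - x))).comp T) z := by
  have hT : HasFDerivAt (fun z => T (z - x)) T z :=
    T.hasFDerivAt.comp z ((hasFDerivAt_id z).sub_const x)
  have hsq : HasFDerivAt (fun z => ‖T (z - x)‖ ^ 2)
      ((2 : ℝ) • (innerSL ℝ (T (z - x))).comp T) z := by
    simpa only [two_smul] using hT.norm_sq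
  exact (hF _).hasDerivAt.comp_hasFDerivAt z hsq

lemma fderiv_fderiv_comp_norm_sq {F : ℝ → ℝ} (hF : ContDiff ℝ 2 F) (v w : E) :
    fderiv ℝ (fun z => fderiv ℝ (fun z => F (‖T (z - x)‖ ^ 2)) z w) z v =
      4 * deriv (deriv F) (‖T (z - x)‖ ^ 2) *
          (inner ℝ (T (z - x)) (T v) * inner ℝ (T (z - x)) (T w)) +
        2 * deriv F (‖T (z - x)‖ ^ 2) * inner ℝ (T v) (T w) := by
  have hfirst : (fun z => fderiv ℝ (fun z => F (‖T (z - x)‖ ^ 2)) z w) = fun z =>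
      deriv F (‖T (z - x)‖ ^ 2) * (2 * inner ℝ (T (z - x)) (T w)) := by
    funext z
    rw [(hasFDerivAt_comp_norm_sq T x z (hF.differentiable two_ne_zero)).fderiv]
    rfl
  have hinner : HasFDerivAt (fun z => 2 * inner ℝ (T (z - x)) (T w))
      ((2 : ℝ) • (innerSL ℝ (T w)).comp T) z := by
    simp only [real_inner_comm (T w)]
    exact (((innerSL ℝ (T w)).comp T).hasFDerivAt.comp z
      ((hasFDerivAt_id z).sub_const x)).const_mul 2
  have hsecond := (hasFDerivAt_comp_norm_sq T x z hF.differentiable_deriv_two).mul hinner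
  rw [hfirst]
  refine (congrArg (· v) hsecond.fderiv).trans ?_
  simp only [add_apply, smul_apply, ContinuousLinearMap.comp_apply, innerSL_apply_apply,
    smul_eq_mul, real_inner_comm (T v) (T w)]
  ring

end RadialDerivatives

section Matrix

open scoped Matrix

variable {d : ℕ} {S : Matrix (Fin d) (Fin d) ℝ}

/-- The linear automorphism of Euclidean space given by an invertible matrix. -/
noncomputable def euclideanEquivOfIsUnitDet (S : Matrix (Fin d) (Fin d) ℝ) (hS : IsUnit S.det) :
    EuclideanSpace ℝ (Fin d) ≃L[ℝ] EuclideanSpace ℝ (Fin d) :=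
  ContinuousLinearEquiv.unitsEquiv ℝ _
    (Units.map (Matrix.toEuclideanCLM (n := Fin d) (𝕜 := ℝ)).toMonoidHom (S.nonsingInvUnit hS))

lemma euclideanEquivOfIsUnitDet_apply (hS : IsUnit S.det) (y : EuclideanSpace ℝ (Fin d)) :
    euclideanEquivOfIsUnitDet S hS y = WithLp.toLp 2 (S *ᵥ y.ofLp) :=
  rfl

lemma euclideanEquivOfIsUnitDet_symm_apply (hS : IsUnit S.det) (y : EuclideanSpace ℝ (Fin d)) :
    (euclideanEquivOfIsUnitDet S hS).symm y = Matrix.toEuclideanCLM (𝕜 := ℝ) S⁻¹ y :=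
  rfl

/-- The Hessian matrix of `φ` at `z`. -/
noncomputable def hessianMatrix (φ : EuclideanSpace ℝ (Fin d) → ℝ)
    (z : EuclideanSpace ℝ (Fin d)) : Matrix (Fin d) (Fin d) ℝ :=
  Matrix.of fun i j => secondPartial d φ i j z

lemma hessianMatrix_comp_norm_sq (A : Matrix (Fin d) (Fin d) ℝ) {F : ℝ → ℝ} (hF : ContDiff ℝ 2 F)
    (x z : EuclideanSpace ℝ (Fin d)) {y : EuclideanSpace ℝ (Fin d)}
    (hy : Matrix.toEuclideanCLM (𝕜 := ℝ) A (z - x) = y) :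
    hessianMatrix (fun z => F (‖Matrix.toEuclideanCLM (𝕜 := ℝ) A (z - x)‖ ^ 2)) z =
      Aᵀ * ((4 * deriv (deriv F) (‖y‖ ^ 2)) • Matrix.vecMulVec y.ofLp y.ofLp +
        (2 * deriv F (‖y‖ ^ 2)) • 1) * A := by
  have hcol (i : Fin d) :
      (Matrix.toEuclideanCLM (𝕜 := ℝ) A (EuclideanSpace.single i 1)).ofLp = A.col i := by
    simp
  have hentry (v : EuclideanSpace ℝ (Fin d)) (i : Fin d) :
      inner ℝ v (Matrix.toEuclideanCLM (𝕜 := ℝ) A (EuclideanSpace.single i 1)) =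
        (Aᵀ *ᵥ v.ofLp) i := by
    rw [EuclideanSpace.inner_eq_star_dotProduct, hcol, star_trivial]
    rfl
  have hgram (i j : Fin d) : inner ℝ (Matrix.toEuclideanCLM (𝕜 := ℝ) A (EuclideanSpace.single i 1))
      (Matrix.toEuclideanCLM (𝕜 := ℝ) A (EuclideanSpace.single j 1)) = (Aᵀ * A) i j := by
    rw [real_inner_comm, hentry, hcol]
    rfl
  ext i j
  rw [hessianMatrix, Matrix.of_apply, secondPartial,
    fderiv_fderiv_comp_norm_sq _ x z hF, hy, hentry, hentry, hgram, mul_add, add_mul,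
    Matrix.mul_smul, Matrix.smul_mul, Matrix.mul_smul, Matrix.smul_mul, mul_one,
    Matrix.mul_vecMulVec, Matrix.vecMulVec_mul, ← Matrix.mulVec_transpose]
  rfl

lemma trace_transpose_mul_hessianMatrix_mul (hS : IsUnit S.det) {F : ℝ → ℝ} (hF : ContDiff ℝ 2 F)
    (x z : EuclideanSpace ℝ (Fin d)) :
    (Sᵀ *
      hessianMatrix (ellipsoidalKernel (euclideanEquivOfIsUnitDet S hS) x F) z * S).trace =
      ellipsoidalKernel (euclideanEquivOfIsUnitDet S hS) x (radialLaplacian d F) z := by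
  set c := |LinearMap.det (euclideanEquivOfIsUnitDet S hS :
    EuclideanSpace ℝ (Fin d) →ₗ[ℝ] EuclideanSpace ℝ (Fin d))|⁻¹ with hc
  have hcancel (M : Matrix (Fin d) (Fin d) ℝ) :
      Sᵀ * (S⁻¹ᵀ * M * S⁻¹) * S = M := by
    rw [← mul_assoc, ← mul_assoc, ← Matrix.transpose_mul, Matrix.nonsing_inv_mul S hS,
      Matrix.transpose_one, one_mul, mul_assoc, Matrix.nonsing_inv_mul S hS, mul_one]
  have hkernel : ellipsoidalKernel (euclideanEquivOfIsUnitDet S hS) x F =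
      fun z => (fun u => c * F u) (‖Matrix.toEuclideanCLM (𝕜 := ℝ) S⁻¹ (z - x)‖ ^ 2) := by
    funext z
    rw [ellipsoidalKernel, euclideanEquivOfIsUnitDet_symm_apply]
  rw [hkernel, hessianMatrix_comp_norm_sq S⁻¹ (contDiff_const.mul hF) x z
      (euclideanEquivOfIsUnitDet_symm_apply hS (z - x)).symm, hcancel, ellipsoidalKernel, ← hc]
  set y := (euclideanEquivOfIsUnitDet S hS).symm (z - x)
  have hnorm : ‖y‖ ^ 2 = y.ofLp ⬝ᵥ y.ofLp := by
    rw [EuclideanSpace.real_norm_sq_eq, dotProduct]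
    simp only [pow_two]
  rw [← congrFun (radialLaplacian_const_mul d c F), Matrix.trace_add, Matrix.trace_smul,
    Matrix.trace_smul, Matrix.trace_vecMulVec, Matrix.trace_one, ← hnorm, radialLaplacian,
    Fintype.card_fin, smul_eq_mul, smul_eq_mul]
  ring

end Matrix

section SecondDerivMeasures

open scoped Matrix

variable {d : ℕ} {f φ : EuclideanSpace ℝ (Fin d) → ℝ} {S : Matrix (Fin d) (Fin d) ℝ}
  {μp μn : Fin d → Fin d → Measure (EuclideanSpace ℝ (Fin d))}

/-- The matrix of the integrals `∫ φ dμ_{ij}` with respect to the signed measures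
`μ_{ij} = μp i j - μn i j`. -/
noncomputable def pairingMatrix (μp μn : Fin d → Fin d → Measure (EuclideanSpace ℝ (Fin d)))
    (φ : EuclideanSpace ℝ (Fin d) → ℝ) : Matrix (Fin d) (Fin d) ℝ :=
  Matrix.of fun i j => (∫ z, φ z ∂(μp i j)) - ∫ z, φ z ∂(μn i j)

lemma trace_transpose_mul_mul (S M : Matrix (Fin d) (Fin d) ℝ) :
    (Sᵀ * M * S).trace = ∑ i, ∑ j, (S * Sᵀ) i j * M j i := by
  rw [Matrix.trace_mul_cycle]
  rfl

lemma integrable_mul_secondPartial (hf : LocallyIntegrable f) (hφ : ContDiff ℝ 2 φ)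
    (hcpt : HasCompactSupport φ) (i j : Fin d) :
    Integrable fun z => f z * secondPartial d φ i j z := by
  have hfirst : ContDiff ℝ 1 fun z => fderiv ℝ φ z (EuclideanSpace.single j 1) :=
    (hφ.fderiv_right le_rfl).clm_apply contDiff_const
  exact hf.integrable_smul_right_of_hasCompactSupport
    ((hfirst.continuous_fderiv one_ne_zero).clm_apply continuous_const)
    ((hcpt.fderiv_apply ℝ _).fderiv_apply ℝ _)

lemma trace_transpose_mul_pairingMatrix_mul (hμ : IsSecondDerivMeasures d f μp μn)
    (hf : LocallyIntegrable f) (hφ : ContDiff ℝ (⊤ : ℕ∞) φ) (hcpt : HasCompactSupport φ)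
    (S : Matrix (Fin d) (Fin d) ℝ) :
    (Sᵀ * pairingMatrix μp μn φ * S).trace = ∫ z, f z * (Sᵀ * hessianMatrix φ z * S).trace := by
  have hint (i j : Fin d) : Integrable fun z => f z * hessianMatrix φ z i j :=
    integrable_mul_secondPartial hf (hφ.of_le (by norm_cast)) hcpt i j
  have hsum (i j : Fin d) :
      Integrable fun z => (S * Sᵀ) i j * (f z * hessianMatrix φ z j i) := (hint j i).const_mul _
  calc (Sᵀ * pairingMatrix μp μn φ * S).trace
      = ∑ i, ∑ j, (S * Sᵀ) i j * ∫ z, f z * hessianMatrix φ z j i := by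
        rw [trace_transpose_mul_mul]
        simp only [pairingMatrix, Matrix.of_apply, hμ.2.2 _ _ φ hφ hcpt, hessianMatrix]
    _ = ∫ z, ∑ i, ∑ j, (S * Sᵀ) i j * (f z * hessianMatrix φ z j i) := by
        rw [integral_finsetSum _ fun i _ => integrable_finsetSum _ fun j _ => hsum i j]
        simp only [integral_finsetSum _ fun j _ => hsum _ j, integral_const_mul]
    _ = ∫ z, f z * (Sᵀ * hessianMatrix φ z * S).trace := by
        simp only [trace_transpose_mul_mul, Finset.mul_sum, mul_left_comm]

lemma contDiff_ellipsoidalKernel {E : Type*} [NormedAddCommGroup E] [InnerProductSpace ℝ E]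
    (L : E ≃L[ℝ] E) (x : E) {F : ℝ → ℝ} {m : WithTop ℕ∞} (hF : ContDiff ℝ m F) :
    ContDiff ℝ m (ellipsoidalKernel L x F) :=
  contDiff_const.mul (hF.comp ((L.symm.contDiff.comp (contDiff_id.sub contDiff_const)).norm_sq ℝ))

lemma trace_transpose_mul_pairingMatrix_ellipsoidalKernel_mul
    (hμ : IsSecondDerivMeasures d f μp μn) (hf : LocallyIntegrable f) (hS : IsUnit S.det)
    (x : EuclideanSpace ℝ (Fin d)) {F : ℝ → ℝ} (hF : ContDiff ℝ (⊤ : ℕ∞) F) {R : ℝ} (hR : 0 ≤ R)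
    (hFR : ∀ u, R ≤ u → F u = 0) :
    (Sᵀ * pairingMatrix μp μn (ellipsoidalKernel (euclideanEquivOfIsUnitDet S hS) x F) *
      S).trace =
      ∫ z, f z * ellipsoidalKernel (euclideanEquivOfIsUnitDet S hS) x (radialLaplacian d F) z := by
  rw [trace_transpose_mul_pairingMatrix_mul hμ hf (contDiff_ellipsoidalKernel _ x hF)
    (hasCompactSupport_ellipsoidalKernel _ x hR hFR)]
  simp only [trace_transpose_mul_hessianMatrix_mul hS (hF.of_le (by norm_cast))]

lemma ae_tendsto_pairingMatrix_ellipsoidalKernel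
    [∀ i j, IsLocallyFiniteMeasure (μp i j)] [∀ i j, IsLocallyFiniteMeasure (μn i j)]
    (L : EuclideanSpace ℝ (Fin d) ≃L[ℝ] EuclideanSpace ℝ (Fin d)) {ι : Type*} {l : Filter ι}
    {k : ι → ℝ → ℝ} {R : ℝ} (hR : 0 ≤ R) (hk : IsRadialPeak l R k)
    (hone : Tendsto (fun i => ∫ y : EuclideanSpace ℝ (Fin d), k i (‖y‖ ^ 2)) l (𝓝 1)) :
    ∀ᵐ x : EuclideanSpace ℝ (Fin d),
      Tendsto (fun i => pairingMatrix μp μn (ellipsoidalKernel L x (k i))) l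
        (𝓝 (densityMatrix d μp μn x)) := by
  filter_upwards [ae_all_iff.2 fun i => ae_all_iff.2 fun j =>
      ae_tendsto_integral_ellipsoidalKernel L (μp i j) hR hk hone,
    ae_all_iff.2 fun i => ae_all_iff.2 fun j =>
      ae_tendsto_integral_ellipsoidalKernel L (μn i j) hR hk hone] with x hp hn
  exact tendsto_pi_nhds.2 fun i => tendsto_pi_nhds.2 fun j => (hp i j).sub (hn i j)

lemma ae_tendsto_integral_mul_ellipsoidalKernel_radialLaplacian
    (hμ : IsSecondDerivMeasures d f μp μn) (hf : LocallyIntegrable f) (hS : IsUnit S.det)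
    {ι : Type*} {l : Filter ι} {k : ι → ℝ → ℝ} {R : ℝ} (hR : 0 ≤ R) (hk : IsRadialPeak l R k)
    (hsmooth : ∀ i, ContDiff ℝ (⊤ : ℕ∞) (k i))
    (hone : Tendsto (fun i => ∫ y : EuclideanSpace ℝ (Fin d), k i (‖y‖ ^ 2)) l (𝓝 1)) :
    ∀ᵐ x : EuclideanSpace ℝ (Fin d), Tendsto (fun i => ∫ z, f z *
      ellipsoidalKernel (euclideanEquivOfIsUnitDet S hS) x (radialLaplacian d (k i)) z) l
        (𝓝 (Sᵀ * densityMatrix d μp μn x * S).trace) := by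
  have := hμ.1
  have := hμ.2.1
  have htrace : Continuous fun M : Matrix (Fin d) (Fin d) ℝ => (Sᵀ * M * S).trace := by fun_prop
  filter_upwards [ae_tendsto_pairingMatrix_ellipsoidalKernel (μp := μp) (μn := μn)
    (euclideanEquivOfIsUnitDet S hS) hR hk hone] with x hx
  refine ((htrace.tendsto _).comp hx).congr fun i => ?_
  exact trace_transpose_mul_pairingMatrix_ellipsoidalKernel_mul hμ hf hS x (hsmooth i) hR
    (hk.eq_zero_of_le i)

lemma integral_mul_heatKernel (f : EuclideanSpace ℝ (Fin d) → ℝ) (hS : IsUnit S.det)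
    (x : EuclideanSpace ℝ (Fin d)) (t : ℝ) :
    ∫ y : Fin d → ℝ, f (x + WithLp.toLp 2 (S *ᵥ y)) * heatKernel d t (WithLp.toLp 2 y) =
      ∫ z, f z * ellipsoidalKernel (euclideanEquivOfIsUnitDet S hS) x (gaussianProfile d t) z := by
  simp only [integral_mul_ellipsoidalKernel, euclideanEquivOfIsUnitDet_apply]
  exact (PiLp.volume_preserving_toLp (Fin d)).integral_comp
    (MeasurableEquiv.toLp 2 _).measurableEmbedding
    fun y => f (x + WithLp.toLp 2 (S *ᵥ y.ofLp)) * gaussianProfile d t (‖y‖ ^ 2)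

end SecondDerivMeasures

section Growth

variable {E : Type*} [NormedAddCommGroup E] [InnerProductSpace ℝ E] {f : E → ℝ} {b : ℝ}

lemma norm_sq_le_add_norm_symm_sub_sq (L : E ≃L[ℝ] E) (x z : E) :
    ‖z‖ ^ 2 ≤ 2 * ‖x‖ ^ 2 + 2 * ‖(L : E →L[ℝ] E)‖ ^ 2 * ‖L.symm (z - x)‖ ^ 2 := by
  have hL : ‖z - x‖ ≤ ‖(L : E →L[ℝ] E)‖ * ‖L.symm (z - x)‖ := by
    simpa using (L : E →L[ℝ] E).le_opNorm (L.symm (z - x))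
  calc ‖z‖ ^ 2 ≤ (‖x‖ + ‖z - x‖) ^ 2 := by
        gcongr
        simpa using norm_add_le x (z - x)
    _ ≤ 2 * (‖x‖ ^ 2 + ‖z - x‖ ^ 2) := add_sq_le
    _ ≤ 2 * (‖x‖ ^ 2 + (‖(L : E →L[ℝ] E)‖ * ‖L.symm (z - x)‖) ^ 2) := by gcongr
    _ = _ := by ring

lemma mul_norm_sq_sub_norm_symm_sub_sq_div_le (L : E ≃L[ℝ] E) (x z : E) {t : ℝ} (ht : 0 < t)
    (hbt : 4 * |b| * ‖(L : E →L[ℝ] E)‖ ^ 2 * t ≤ 1) :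
    b * ‖z‖ ^ 2 + -‖L.symm (z - x)‖ ^ 2 / (2 * t) ≤ 2 * |b| * ‖x‖ ^ 2 := by
  have hz : b * ‖z‖ ^ 2 ≤
      |b| * (2 * ‖x‖ ^ 2 + 2 * ‖(L : E →L[ℝ] E)‖ ^ 2 * ‖L.symm (z - x)‖ ^ 2) :=
    mul_le_mul (le_abs_self b) (norm_sq_le_add_norm_symm_sub_sq L x z) (by positivity)
      (abs_nonneg b)
  have hdiv : 2 * |b| * ‖(L : E →L[ℝ] E)‖ ^ 2 * ‖L.symm (z - x)‖ ^ 2 ≤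
      ‖L.symm (z - x)‖ ^ 2 / (2 * t) := by
    rw [le_div_iff₀ (by positivity)]
    linarith [mul_le_mul_of_nonneg_right hbt (sq_nonneg ‖L.symm (z - x)‖)]
  rw [neg_div]
  linarith

variable [FiniteDimensional ℝ E] [MeasurableSpace E] [BorelSpace E]

lemma locallyIntegrable_of_integrable_mul_exp
    (hf : Integrable fun y => f y * Real.exp (-b * ‖y‖ ^ 2)) : LocallyIntegrable f := by
  refine locallyIntegrable_iff.2 fun K hK => ?_
  have hexp : Continuous fun y : E => Real.exp (b * ‖y‖ ^ 2) := by fun_prop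
  refine (hf.integrableOn.mul_continuousOn hexp.continuousOn hK).congr (.of_forall fun y => ?_)
  simp only [mul_assoc, ← Real.exp_add, neg_mul, neg_add_cancel, Real.exp_zero, mul_one]

lemma exists_integrable_mul_ellipsoidalKernel_gaussianProfile (L : E ≃L[ℝ] E) (x : E) (n : ℕ)
    (hf : Integrable fun y => f y * Real.exp (-b * ‖y‖ ^ 2)) :
    ∃ t > 0, Integrable fun z => f z * ellipsoidalKernel L x (gaussianProfile n t) z := by
  set t := (4 * |b| * ‖(L : E →L[ℝ] E)‖ ^ 2 + 1)⁻¹ with ht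
  have htpos : 0 < t := by positivity
  have hbt : 4 * |b| * ‖(L : E →L[ℝ] E)‖ ^ 2 * t ≤ 1 := by
    rw [ht, ← div_eq_mul_inv, div_le_one (by positivity)]
    linarith
  set c := |LinearMap.det (L : E →ₗ[ℝ] E)|⁻¹ * (2 * Real.pi * t) ^ (-(n : ℝ) / 2)
  have hbound (z : E) : ‖Real.exp (b * ‖z‖ ^ 2) * ellipsoidalKernel L x (gaussianProfile n t) z‖ ≤
      c * Real.exp (2 * |b| * ‖x‖ ^ 2) := by
    calc ‖Real.exp (b * ‖z‖ ^ 2) * ellipsoidalKernel L x (gaussianProfile n t) z‖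
        = c * Real.exp (b * ‖z‖ ^ 2 + -‖L.symm (z - x)‖ ^ 2 / (2 * t)) := by
          rw [ellipsoidalKernel, gaussianProfile, Real.norm_of_nonneg (by positivity),
            Real.exp_add]
          ring
      _ ≤ c * Real.exp (2 * |b| * ‖x‖ ^ 2) := by
          gcongr
          exact mul_norm_sq_sub_norm_symm_sub_sq_div_le L x z htpos hbt
  have hcont : Continuous fun z =>
      Real.exp (b * ‖z‖ ^ 2) * ellipsoidalKernel L x (gaussianProfile n t) z :=
    (by fun_prop : Continuous fun z : E => Real.exp (b * ‖z‖ ^ 2)).mul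
      (continuous_ellipsoidalKernel L x (contDiff_gaussianProfile (m := 0) t).continuous)
  refine ⟨t, htpos, (hf.mul_bdd hcont.aestronglyMeasurable (.of_forall hbound)).congr
    (.of_forall fun z => ?_)⟩
  simp only [neg_mul, Real.exp_neg]
  field_simp

lemma integrable_exp_neg_mul_norm_sq (hb : 0 < b) :
    Integrable fun y : E => Real.exp (-b * ‖y‖ ^ 2) := by
  refine .of_integral_ne_zero ?_
  rw [GaussianFourier.integral_rexp_neg_mul_sq_norm hb]
  positivity

lemma integrable_mul_exp_of_abs_le {A B : ℝ} (hf : Continuous f)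
    (hgrowth : ∀ y, |f y| ≤ A * ‖y‖ + B) (hb : 0 < b) :
    Integrable fun y => f y * Real.exp (-b * ‖y‖ ^ 2) := by
  have hexp : Integrable fun y : E => Real.exp (-(b / 2) * ‖y‖ ^ 2) :=
    integrable_exp_neg_mul_norm_sq (half_pos hb)
  refine (hexp.const_mul (|B| + A ^ 2 / (2 * b) + 1)).mono' (by fun_prop) (.of_forall fun y => ?_)
  have hamgm : A * ‖y‖ ≤ A ^ 2 / (2 * b) + b / 2 * ‖y‖ ^ 2 := by
    rw [← sub_nonneg, show A ^ 2 / (2 * b) + b / 2 * ‖y‖ ^ 2 - A * ‖y‖ =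
      (A - b * ‖y‖) ^ 2 / (2 * b) by field_simp; ring]
    positivity
  have hlin : b / 2 * ‖y‖ ^ 2 + 1 ≤ Real.exp (b / 2 * ‖y‖ ^ 2) := Real.add_one_le_exp _
  have hone : 1 ≤ Real.exp (b / 2 * ‖y‖ ^ 2) := Real.one_le_exp (by positivity)
  have hC : 0 ≤ |B| + A ^ 2 / (2 * b) := by positivity
  rw [norm_mul, Real.norm_eq_abs, Real.norm_of_nonneg (Real.exp_pos _).le]
  calc |f y| * Real.exp (-b * ‖y‖ ^ 2)
      ≤ (|B| + A ^ 2 / (2 * b) + 1) * Real.exp (b / 2 * ‖y‖ ^ 2) * Real.exp (-b * ‖y‖ ^ 2) := by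
        gcongr
        nlinarith [hgrowth y, le_abs_self B]
    _ = (|B| + A ^ 2 / (2 * b) + 1) * Real.exp (-(b / 2) * ‖y‖ ^ 2) := by
        rw [mul_assoc, ← Real.exp_add]
        ring_nf

end Growth

theorem transformed_increment_average_tendsto_half_trace_general (d : ℕ)
    (f : EuclideanSpace ℝ (Fin d) → ℝ) (b : ℝ)
    (hf : Integrable fun y => f y * Real.exp (-b * ‖y‖ ^ 2))
    (S : Matrix (Fin d) (Fin d) ℝ) (hS : IsUnit S.det)
    (μp μn : Fin d → Fin d → Measure (EuclideanSpace ℝ (Fin d)))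
    (hμ : IsSecondDerivMeasures d f μp μn) :
    ∀ᵐ x : EuclideanSpace ℝ (Fin d),
      Tendsto (fun t : ℝ => (1 / t) *
          ((∫ y : Fin d → ℝ, f (x + WithLp.toLp 2 (S.mulVec y)) *
            heatKernel d t (WithLp.toLp 2 y)) - f x))
        (𝓝[>] 0) (𝓝 ((1 / 2) * Matrix.trace (S.transpose * densityMatrix d μp μn x * S))) := by
  have hloc := locallyIntegrable_of_integrable_mul_exp hf
  have hpeak := isRadialPeak_truncatedProfile d
  have hone : Tendsto
      (fun s => ∫ y : EuclideanSpace ℝ (Fin d), truncatedProfile d s (‖y‖ ^ 2)) (𝓝[>] 0) (𝓝 1) := by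
    simpa using tendsto_integral_truncatedProfile (E := EuclideanSpace ℝ (Fin d))
  filter_upwards [ae_tendsto_integral_mul_ellipsoidalKernel (euclideanEquivOfIsUnitDet S hS) hloc
      zero_le_two hpeak hone,
    ae_tendsto_integral_mul_ellipsoidalKernel_radialLaplacian hμ hloc hS zero_le_two hpeak
      (fun s => contDiff_truncatedProfile s) hone] with x hfx hlaplacian
  obtain ⟨t, ht, hft⟩ := exists_integrable_mul_ellipsoidalKernel_gaussianProfile
    (euclideanEquivOfIsUnitDet S hS) x d hf
  refine (tendsto_inv_mul_integral_gaussianProfile_sub _ x hloc ht hft hfx hlaplacian).congr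
    fun s => ?_
  rw [← integral_mul_heatKernel, one_div]

theorem transformed_increment_average_tendsto_half_trace (d : ℕ)
    (f : EuclideanSpace ℝ (Fin d) → ℝ) (hf : ConvexOn ℝ Set.univ f)
    (A B : ℝ) (hgrowth : ∀ y, |f y| ≤ A * ‖y‖ + B)
    (S : Matrix (Fin d) (Fin d) ℝ) (hS : IsUnit S.det)
    (μp μn : Fin d → Fin d → Measure (EuclideanSpace ℝ (Fin d)))
    (hμ : IsSecondDerivMeasures d f μp μn) :
    ∀ᵐ x ∂(volume : Measure (EuclideanSpace ℝ (Fin d))),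
      Filter.Tendsto
        (fun t : ℝ => (1 / t) *
          ((∫ y, f (x + (show EuclideanSpace ℝ (Fin d) from WithLp.toLp 2 (S.mulVec y))) * heatKernel d t (WithLp.toLp 2 y)) - f x))
        (nhdsWithin 0 (Set.Ioi 0))
        (nhds ((1 / 2) *
          Matrix.trace (S.transpose * densityMatrix d μp μn x * S))) :=
  transformed_increment_average_tendsto_half_trace_general d f 1
    (integrable_mul_exp_of_abs_le hf.locallyLipschitz.continuous hgrowth one_pos) S hS μp μn hμ
end
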